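/- Let n ≥ 4 be an integer and let c₀ : (0, ξ_m) → ℝ be the continuous function such that for each ξ ∈ (0, ξ_m), the solution m_{ξ} of the equation m''(x) + (x/2 − 2δ/x) m'(x) + (δ(δ+1)/x² − (δ/2 − ε)) m(x) = (1/x²)(2 μ₁(x) m(x)/x)^n with m_{ξ}(ξ) = c₀(ξ) ∈ (λ, c₂(ξ)), m_{ξ}'(ξ) = 0 is positive on (0,ξ] with m_{ξ}(x) → λ as x → 0⁺. Then there exists a unique ξ* ∈ (0, ξ_m) such that m_{ξ*} extends to a solution on all of (0,∞) that is positive and satisfies lim_{x→∞} m_{ξ*}(x) = 0. -/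

import Mathlib

noncomputable def kap : ℝ := 1 / Real.sqrt Real.pi

noncomputable def eps (n : ℕ) : ℝ := 1 / ((n : ℝ) - 1)

noncomputable def del (n : ℕ) : ℝ := ((n : ℝ) + 2) / ((n : ℝ) - 1)

noncomputable def lam (n : ℕ) : ℝ :=
  (del n * (del n + 1) / (2 * kap) ^ n) ^ (1 / ((n : ℝ) - 1))

noncomputable def mu1 (y : ℝ) : ℝ :=
  (2 / Real.sqrt Real.pi) * ∫ σ in (0:ℝ)..(y / 2), Real.exp (-σ ^ 2)

/-- ξ₀ = √(δ(δ+1)/(nε/2)). -/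
noncomputable def xi0 (n : ℕ) : ℝ :=
  Real.sqrt (del n * (del n + 1) / ((n : ℝ) * eps n / 2))

/-- c₂(ξ) = ((nε/2)/(2μ₁(ξ)/ξ)ⁿ · (ξ₀² − ξ²))^ε. -/
noncomputable def c2 (n : ℕ) (ξ : ℝ) : ℝ :=
  (((n : ℝ) * eps n / 2) / (2 * mu1 ξ / ξ) ^ n * (xi0 n ^ 2 - ξ ^ 2)) ^ eps n

/-- ω₁(ξ) = (2μ₁(ξ)/ξ)ⁿ/ξ². -/
noncomputable def om1 (n : ℕ) (ξ : ℝ) : ℝ := (2 * mu1 ξ / ξ) ^ n / ξ ^ 2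

/-- ω₂(ξ) = nε/2 − δ(δ+1)/ξ². -/
noncomputable def om2 (n : ℕ) (ξ : ℝ) : ℝ :=
  (n : ℝ) * eps n / 2 - del n * (del n + 1) / ξ ^ 2

/-- m is a solution on (0,ξ] of the equation for m = y^δ μ₂ with initial data
m(ξ) = ρ, m'(ξ) = 0, positive on (0,ξ], and m(x) → λ as x → 0⁺. -/
def IsShootSol (n : ℕ) (ξ ρ : ℝ) (m : ℝ → ℝ) : Prop :=
  ContDiffOn ℝ 2 m (Set.Ioc 0 ξ) ∧
  (∀ x ∈ Set.Ioc (0:ℝ) ξ,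
    derivWithin (derivWithin m (Set.Ioc 0 ξ)) (Set.Ioc 0 ξ) x
        + (x / 2 - 2 * del n / x) * derivWithin m (Set.Ioc 0 ξ) x
        + (del n * (del n + 1) / x ^ 2 - (del n / 2 - eps n)) * m x
      = (1 / x ^ 2) * (2 * mu1 x * m x / x) ^ n) ∧
  m ξ = ρ ∧
  derivWithin m (Set.Ioc 0 ξ) ξ = 0 ∧
  (∀ x ∈ Set.Ioc (0:ℝ) ξ, 0 < m x) ∧
  Filter.Tendsto m (nhdsWithin 0 (Set.Ioi 0)) (nhds (lam n))


/-!
With `μ₂ = m / x ^ δ`, the variables `u = exp (x² / 4) μ₂` and `w = μ₂' + (x / 2) μ₂` turn the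
equation into a planar system `u' = exp (x² / 4) w`, `w' = G x u` with `G ≥ 0`, for which the
quadrants `u, w > 0` and `u, w < 0` are absorbing.

Existence is by shooting in `ξ`. For `ξ` close to `ξ_m` the trajectory starting at rest from
`c₀ ξ` begins in the positive quadrant, because `√(2 δ) < ξ_m`. For `ξ` close to `0` it enters the
negative one: as long as `m` is positive it decreases below the increasing curve `c₂`, its flux
`x ^ (-2 δ) exp (x² / 4) m'` is bounded independently of `ξ`, and yet the flux drops by a multiple
of `1 / ξ` on `[2 ξ, 4 ξ]` since `c₀ ξ > λ`. By connectedness some trajectory avoids both quadrants.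
It satisfies `u > 0 ≥ w`, so `u` is bounded and `m = x ^ δ exp (-x² / 4) u` tends to `0`.

For uniqueness, every decaying solution has `w ≤ 0`, and all those in question have the same limit
`λ ≠ 0` at `0`. As `G x u / u` increases with `u`, the Wronskian of two of them is monotone while
they are ordered, which forces them to coincide. One solution cannot be at rest at two points of
`(0, ξ_m)`, because below `c₂` it decreases strictly after the first.
-/

section

open Real Set Filter Topology
open scoped NNReal

/-! ### Integral curves of time-dependent vector fields -/

section IntegralCurves

variable {E : Type*} [NormedAddCommGroup E] [NormedSpace ℝ E]

/-- A time-dependent vector field that is continuous in time and, uniformly on compact time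
intervals, globally Lipschitz and bounded in space. Its integral curves exist for all times, are
unique and depend continuously on the initial data. -/
structure IsBoundedLipschitzField (v : ℝ → E → E) : Prop where
  continuous_time : ∀ x, Continuous (v · x)
  lipschitz : ∀ T : ℝ, ∃ K : ℝ≥0, ∀ t ∈ Icc (-T) T, LipschitzWith K (v t)
  bounded : ∀ T : ℝ, ∃ L : ℝ≥0, ∀ t ∈ Icc (-T) T, ∀ x, ‖v t x‖ ≤ L

variable {v : ℝ → E → E} {γ η : ℝ → E} {s : Set ℝ} {t t₀ ξ T : ℝ}

theorem isIntegralCurveOn_glue (hγ : IsIntegralCurveOn γ v (Ioc t₀ ξ))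
    (hη : IsIntegralCurveOn η v (Ici ξ)) (h : γ ξ = η ξ) :
    IsIntegralCurveOn (fun t ↦ if t ≤ ξ then γ t else η t) v (Ioi t₀) := by
  set ζ : ℝ → E := fun t ↦ if t ≤ ξ then γ t else η t
  have hζγ : EqOn ζ γ (Iic ξ) := fun t ht ↦ if_pos ht
  have hζη : EqOn ζ η (Ici ξ) := fun t ht ↦ by
    rcases eq_or_lt_of_le (mem_Ici.1 ht) with rfl | hlt
    · exact (if_pos le_rfl).trans h
    · exact if_neg hlt.not_ge
  intro t ht
  have hleft : t ≤ ξ → HasDerivWithinAt ζ (v t (ζ t)) (Ioc t₀ ξ) t := fun hle ↦ by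
    rw [hζγ hle]
    exact (hγ t ⟨ht, hle⟩).congr (fun s hs ↦ hζγ hs.2) (hζγ hle)
  have hright : ξ ≤ t → HasDerivWithinAt ζ (v t (ζ t)) (Ici ξ) t := fun hle ↦ by
    rw [hζη hle]
    exact (hη t hle).congr hζη (hζη hle)
  rcases lt_trichotomy t ξ with hlt | rfl | hgt
  · exact ((hleft hlt.le).hasDerivAt (Ioc_mem_nhds ht hlt)).hasDerivWithinAt
  · rw [← Ioc_union_Ici_eq_Ioi ht]
    exact (hleft le_rfl).union (hright le_rfl)
  · exact ((hright hgt.le).hasDerivAt (Ici_mem_nhds hgt)).hasDerivWithinAt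

theorem integralCurveOn_eqOn_of_locallyLipschitz {a b : ℝ}
    (hv : LocallyLipschitz fun z : ℝ × E ↦ v z.1 z.2)
    (hγ : IsIntegralCurveOn γ v (Icc a b)) (hη : IsIntegralCurveOn η v (Icc a b))
    (h : γ b = η b) : EqOn γ η (Icc a b) := by
  set C := γ '' Icc a b ∪ η '' Icc a b
  have hC : IsCompact (Icc a b ×ˢ C) := isCompact_Icc.prod
    ((isCompact_Icc.image_of_continuousOn hγ.continuousOn).union
      (isCompact_Icc.image_of_continuousOn hη.continuousOn))
  obtain ⟨K, hK⟩ := hv.locallyLipschitzOn.exists_lipschitzOnWith_of_compact hC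
  have hlip : ∀ t ∈ Ioc a b, LipschitzOnWith (K * 1) (v t) C := fun t ht ↦
    hK.comp (LipschitzWith.prodMk_left t).lipschitzOnWith
      fun x hx ↦ ⟨Ioc_subset_Icc_self ht, hx⟩
  have hleft : ∀ {α : ℝ → E}, IsIntegralCurveOn α v (Icc a b) →
      ∀ t ∈ Ioc a b, HasDerivWithinAt α (v t (α t)) (Iic t) t := fun hα t ht ↦
    (hα t (Ioc_subset_Icc_self ht)).mono_of_mem_nhdsWithin (Icc_mem_nhdsLE_of_mem ht)
  exact ODE_solution_unique_of_mem_Icc_left hlip hγ.continuousOn (hleft hγ)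
    (fun t ht ↦ Or.inl (mem_image_of_mem γ (Ioc_subset_Icc_self ht))) hη.continuousOn (hleft hη)
    (fun t ht ↦ Or.inr (mem_image_of_mem η (Ioc_subset_Icc_self ht))) h

theorem IsBoundedLipschitzField.eqOn_Icc (hv : IsBoundedLipschitzField v)
    (hγ : IsIntegralCurveOn γ v (Icc (-T) T)) (hη : IsIntegralCurveOn η v (Icc (-T) T))
    (ht₀ : t₀ ∈ Ioo (-T) T) (h : γ t₀ = η t₀) : EqOn γ η (Icc (-T) T) := by
  obtain ⟨K, hK⟩ := hv.lipschitz T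
  have hderiv : ∀ {α : ℝ → E}, IsIntegralCurveOn α v (Icc (-T) T) →
      ∀ t ∈ Ioo (-T) T, HasDerivAt α (v t (α t)) t := fun hα t ht ↦
    (hα t (Ioo_subset_Icc_self ht)).hasDerivAt (Icc_mem_nhds ht.1 ht.2)
  exact ODE_solution_unique_of_mem_Icc (s := fun _ ↦ univ)
    (fun t ht ↦ (hK t (Ioo_subset_Icc_self ht)).lipschitzOnWith) ht₀ hγ.continuousOn (hderiv hγ)
    (fun _ _ ↦ mem_univ _) hη.continuousOn (hderiv hη) (fun _ _ ↦ mem_univ _) h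

theorem IsBoundedLipschitzField.integralCurve_unique (hv : IsBoundedLipschitzField v)
    (hγ : IsIntegralCurve γ v) (hη : IsIntegralCurve η v) (h : γ t₀ = η t₀) : γ = η := by
  funext t
  have ht₀ : t₀ ∈ Ioo (-(|t₀| + |t| + 1)) (|t₀| + |t| + 1) :=
    abs_lt.1 (by linarith [abs_nonneg t])
  exact hv.eqOn_Icc (hγ.isIntegralCurveOn _) (hη.isIntegralCurveOn _) ht₀ h
    (abs_le.1 (by linarith [abs_nonneg t₀]))

theorem IsBoundedLipschitzField.exists_isIntegralCurveOn_Icc [CompleteSpace E]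
    (hv : IsBoundedLipschitzField v) (ht₀ : t₀ ∈ Icc (-T) T) (x₀ : E) :
    ∃ γ : ℝ → E, γ t₀ = x₀ ∧ IsIntegralCurveOn γ v (Icc (-T) T) := by
  obtain ⟨K, hK⟩ := hv.lipschitz T
  obtain ⟨L, hL⟩ := hv.bounded T
  have hpl : IsPicardLindelof v (⟨t₀, ht₀⟩ : Icc (-T) T) x₀ (L * (2 * T).toNNReal) 0 L K :=
    { lipschitzOnWith := fun t ht ↦ (hK t ht).lipschitzOnWith
      continuousOn := fun x _ ↦ (hv.continuous_time x).continuousOn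
      norm_le := fun t ht x _ ↦ hL t ht x
      mul_max_le := by
        rw [NNReal.coe_mul, NNReal.coe_zero, sub_zero,
          Real.coe_toNNReal _ (by linarith [ht₀.1, ht₀.2])]
        gcongr
        exact max_le (by linarith [ht₀.1]) (by linarith [ht₀.2]) }
  exact hpl.exists_eq_forall_mem_Icc_hasDerivWithinAt₀

theorem IsBoundedLipschitzField.exists_isIntegralCurve [CompleteSpace E]
    (hv : IsBoundedLipschitzField v) (t₀ : ℝ) (x₀ : E) :
    ∃ γ : ℝ → E, γ t₀ = x₀ ∧ IsIntegralCurve γ v := by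
  have hmem {r : ℝ} (hr : 0 < r) : t₀ ∈ Ioo (-(|t₀| + r)) (|t₀| + r) := abs_lt.1 (by linarith)
  have hlocal (r : ℝ) : ∃ γ : ℝ → E, 0 < r →
      γ t₀ = x₀ ∧ IsIntegralCurveOn γ v (Icc (-(|t₀| + r)) (|t₀| + r)) := by
    by_cases hr : 0 < r
    · obtain ⟨γ, hγ⟩ := hv.exists_isIntegralCurveOn_Icc (Ioo_subset_Icc_self (hmem hr)) x₀
      exact ⟨γ, fun _ ↦ hγ⟩
    · exact ⟨0, fun h ↦ absurd h hr⟩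
  choose γ hγ using hlocal
  have hagree {r r' s : ℝ} (hr : 0 < r) (hrr' : r ≤ r') (hs : |s| ≤ r) : γ r s = γ r' s :=
    hv.eqOn_Icc (hγ r hr).2
      ((hγ r' (hr.trans_le hrr')).2.mono (Icc_subset_Icc (by linarith) (by linarith))) (hmem hr)
      ((hγ r hr).1.trans (hγ r' (hr.trans_le hrr')).1.symm)
      (abs_le.1 (by linarith [abs_nonneg t₀]))
  have hpos (s : ℝ) : 0 < |s| + 1 := by positivity
  refine ⟨fun s ↦ γ (|s| + 1) s, (hγ _ (hpos t₀)).1, fun t ↦ ?_⟩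
  have hnear : (fun s ↦ γ (|s| + 1) s) =ᶠ[𝓝 t] γ (|t| + 2) := by
    filter_upwards [continuous_abs.continuousAt.eventually_lt_const (lt_add_one |t|)] with s hs
    exact hagree (hpos s) (by linarith) (by linarith)
  have ht : t ∈ Ioo (-(|t₀| + (|t| + 2))) (|t₀| + (|t| + 2)) :=
    abs_lt.1 (by linarith [abs_nonneg t₀])
  have hderiv := ((hγ (|t| + 2) (by positivity)).2 t (Ioo_subset_Icc_self ht)).hasDerivAt
    (Icc_mem_nhds ht.1 ht.2)
  rw [← hnear.eq_of_nhds] at hderiv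
  exact hderiv.congr_of_eventuallyEq hnear

theorem IsBoundedLipschitzField.continuousOn_apply (hv : IsBoundedLipschitzField v)
    {Γ : ℝ → ℝ → E} {D : ℝ → E} {a b : ℝ} (hD : ContinuousOn D (Icc a b)) (hbT : b ≤ T)
    (hΓ₀ : ∀ ξ, Γ ξ ξ = D ξ) (hΓ : ∀ ξ, IsIntegralCurve (Γ ξ) v) :
    ContinuousOn (fun ξ ↦ Γ ξ T) (Icc a b) := by
  obtain ⟨K, hK⟩ := hv.lipschitz (max |a| |T|)
  intro ξ₀ hξ₀
  have hlim : Tendsto (fun ξ ↦ dist (D ξ) (Γ ξ₀ ξ) * exp (K * (T - ξ))) (𝓝[Icc a b] ξ₀) (𝓝 0) := by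
    have hcont : ContinuousWithinAt (fun ξ ↦ dist (D ξ) (Γ ξ₀ ξ) * exp (K * (T - ξ)))
        (Icc a b) ξ₀ :=
      ((hD ξ₀ hξ₀).dist (hΓ ξ₀).continuous.continuousWithinAt).mul
        (Continuous.continuousWithinAt (by fun_prop))
    simpa only [hΓ₀, dist_self, zero_mul] using hcont.tendsto
  refine tendsto_iff_dist_tendsto_zero.2 (squeeze_zero' (.of_forall fun _ ↦ dist_nonneg) ?_ hlim)
  filter_upwards [self_mem_nhdsWithin] with ξ hξ
  have htime : ∀ t ∈ Ico ξ T, t ∈ Icc (-max |a| |T|) (max |a| |T|) := fun t ht ↦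
    abs_le.1 (abs_le_max_abs_abs (hξ.1.trans ht.1) ht.2.le)
  exact dist_le_of_trajectories_ODE_of_mem (s := fun _ ↦ univ)
    (fun t ht ↦ (hK t (htime t ht)).lipschitzOnWith)
    (hΓ ξ).continuous.continuousOn (fun t _ ↦ (hΓ ξ t).hasDerivWithinAt) (fun _ _ ↦ mem_univ _)
    (hΓ ξ₀).continuous.continuousOn (fun t _ ↦ (hΓ ξ₀ t).hasDerivWithinAt) (fun _ _ ↦ mem_univ _)
    (by rw [hΓ₀]) T ⟨hξ.2.trans hbT, le_rfl⟩

end IntegralCurves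

/-! ### Calculus on intervals -/

section Calculus

variable {f f' : ℝ → ℝ} {D : Set ℝ} {a b : ℝ}

theorem monotoneOn_of_hasDerivWithinAt (hD : Convex ℝ D)
    (hf : ∀ x ∈ D, HasDerivWithinAt f (f' x) D x) (hf' : ∀ x ∈ D, 0 ≤ f' x) : MonotoneOn f D :=
  monotoneOn_of_hasDerivWithinAt_nonneg hD (fun x hx ↦ (hf x hx).continuousWithinAt)
    (fun x hx ↦ (hf x (interior_subset hx)).mono interior_subset)
    fun x hx ↦ hf' x (interior_subset hx)

theorem antitoneOn_of_hasDerivWithinAt (hD : Convex ℝ D)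
    (hf : ∀ x ∈ D, HasDerivWithinAt f (f' x) D x) (hf' : ∀ x ∈ D, f' x ≤ 0) : AntitoneOn f D :=
  antitoneOn_of_hasDerivWithinAt_nonpos hD (fun x hx ↦ (hf x hx).continuousWithinAt)
    (fun x hx ↦ (hf x (interior_subset hx)).mono interior_subset)
    fun x hx ↦ hf' x (interior_subset hx)

theorem sub_le_mul_sub_of_hasDerivWithinAt_le {C : ℝ} (hab : a ≤ b) (hD : Icc a b ⊆ D)
    (hf : ∀ x ∈ Icc a b, HasDerivWithinAt f (f' x) D x) (hf' : ∀ x ∈ Icc a b, f' x ≤ C) :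
    f b - f a ≤ C * (b - a) := by
  have hanti : AntitoneOn (fun x ↦ f x - C * x) (Icc a b) :=
    antitoneOn_of_hasDerivWithinAt (convex_Icc a b)
      (fun x hx ↦ ((hf x hx).mono hD).sub ((hasDerivWithinAt_id x _).const_mul C))
      fun x hx ↦ by simpa only [mul_one, sub_nonpos] using hf' x hx
  have h := hanti (left_mem_Icc.2 hab) (right_mem_Icc.2 hab) hab
  simp only at h
  linarith

theorem exists_first_zero (hab : a ≤ b) (hf : ContinuousOn f (Icc a b)) (ha : f a < 0)
    (hb : 0 ≤ f b) : ∃ y ∈ Ioc a b, f y = 0 ∧ ∀ x ∈ Ico a y, f x < 0 := by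
  have hzero : ∀ x ∈ Icc a b, 0 ≤ f x → ∃ z ∈ Icc a x, f z = 0 := fun x hx hfx ↦
    intermediate_value_Icc hx.1 (hf.mono (Icc_subset_Icc_right hx.2)) ⟨ha.le, hfx⟩
  obtain ⟨z, hz, hfz⟩ := hzero b (right_mem_Icc.2 hab) hb
  obtain ⟨y, ⟨hy, hfy⟩, hleast⟩ :=
    (isCompact_Icc.of_isClosed_subset (hf.preimage_isClosed_of_isClosed isClosed_Icc
      (isClosed_singleton (x := (0 : ℝ)))) inter_subset_left).exists_isLeast ⟨z, hz, hfz⟩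
  have hay : a ≠ y := by
    rintro rfl
    exact ha.ne hfy
  refine ⟨y, ⟨hy.1.lt_of_ne hay, hy.2⟩, hfy, fun x hx ↦ lt_of_not_ge fun hfx ↦ ?_⟩
  obtain ⟨z, hz, hfz⟩ := hzero x ⟨hx.1, hx.2.le.trans hy.2⟩ hfx
  exact (hz.2.trans_lt hx.2).not_ge
    (hleast ⟨⟨hz.1, hz.2.trans (hx.2.le.trans hy.2)⟩, hfz⟩)

theorem nonneg_of_hasDerivAt_of_forall_Ico_neg {y d : ℝ} (hf : HasDerivAt f d y) (hay : a < y)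
    (hy : f y = 0) (hneg : ∀ x ∈ Ico a y, f x < 0) : 0 ≤ d := by
  by_contra! hd
  have hsign := eventually_nhdsWithin_sign_eq_of_deriv_neg (hf.deriv.symm ▸ hd) hy
  obtain ⟨x, hx, hxay⟩ := ((hsign.filter_mono nhdsWithin_le_nhds).and
    (Ico_mem_nhdsLT hay)).exists
  rw [sign_neg (hneg x hxay), sign_pos (sub_pos.2 hxay.2)] at hx
  exact absurd hx (by decide)

theorem hasDerivWithinAt_fst {E F : Type*} [NormedAddCommGroup E] [NormedSpace ℝ E]
    [NormedAddCommGroup F] [NormedSpace ℝ F] {γ : ℝ → E × F} {d : E × F} {t : ℝ}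
    (hγ : HasDerivWithinAt γ d D t) : HasDerivWithinAt (fun t ↦ (γ t).1) d.1 D t :=
  (hasFDerivAt_fst (𝕜 := ℝ) (p := γ t)).comp_hasDerivWithinAt t hγ

theorem hasDerivWithinAt_snd {E F : Type*} [NormedAddCommGroup E] [NormedSpace ℝ E]
    [NormedAddCommGroup F] [NormedSpace ℝ F] {γ : ℝ → E × F} {d : E × F} {t : ℝ}
    (hγ : HasDerivWithinAt γ d D t) : HasDerivWithinAt (fun t ↦ (γ t).2) d.2 D t :=
  (hasFDerivAt_snd (𝕜 := ℝ) (p := γ t)).comp_hasDerivWithinAt t hγ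

end Calculus

/-! ### Planar shooting -/

section PlanarShooting

/-- The planar vector field `(F t w, G t u)` at the point `(u, w)`, i.e. the system
`u' = F t w`, `w' = G t u`. -/
def planarField (F G : ℝ → ℝ → ℝ) (t : ℝ) (q : ℝ × ℝ) : ℝ × ℝ := (F t q.2, G t q.1)

/-- Sign conditions on the system `u' = F t w`, `w' = G t u` under which the open quadrants
`u, w < 0` and `u, w > 0` are both absorbing, so that a connected family of trajectories meeting
both of them contains one that avoids both. -/
structure IsShootingSystem (F G : ℝ → ℝ → ℝ) : Prop where
  sign_fst : ∀ t w, SignType.sign (F t w) = SignType.sign w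
  snd_eq_zero : ∀ t u, u ≤ 0 → G t u = 0
  snd_nonneg : ∀ t u, 0 < t → 0 ≤ G t u

variable {F G : ℝ → ℝ → ℝ} {γ : ℝ → ℝ × ℝ} {a b s t : ℝ}

namespace IsShootingSystem

theorem fst_pos_iff (h : IsShootingSystem F G) {w : ℝ} : 0 < F t w ↔ 0 < w := by
  rw [← sign_eq_one_iff, h.sign_fst, sign_eq_one_iff]

theorem fst_neg_iff (h : IsShootingSystem F G) {w : ℝ} : F t w < 0 ↔ w < 0 := by
  rw [← sign_eq_neg_one_iff, h.sign_fst, sign_eq_neg_one_iff]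

theorem fst_nonpos_iff (h : IsShootingSystem F G) {w : ℝ} : F t w ≤ 0 ↔ w ≤ 0 := by
  simpa only [not_lt] using h.fst_pos_iff.not

theorem isIntegralCurve_zero (h : IsShootingSystem F G) :
    IsIntegralCurve (fun _ ↦ 0) (planarField F G) := fun t ↦ by
  have hF : F t 0 = 0 := sign_eq_zero_iff.1 ((h.sign_fst t 0).trans sign_zero)
  have hV : planarField F G t 0 = 0 := Prod.ext hF (h.snd_eq_zero t 0 le_rfl)
  rw [hV]
  exact hasDerivAt_const t 0

theorem monotoneOn_snd (h : IsShootingSystem F G) (hγ : IsIntegralCurve γ (planarField F G)) :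
    MonotoneOn (fun t ↦ (γ t).2) (Ioi 0) :=
  monotoneOn_of_hasDerivWithinAt (convex_Ioi 0)
    (fun t _ ↦ hasDerivWithinAt_snd (hγ t).hasDerivWithinAt) fun t ht ↦ h.snd_nonneg t _ ht

theorem posQuadrant_absorbing (h : IsShootingSystem F G)
    (hγ : IsIntegralCurve γ (planarField F G)) (hs : 0 < s) (hst : s ≤ t)
    (hγs : γ s ∈ Ioi 0 ×ˢ Ioi 0) : γ t ∈ Ioi 0 ×ˢ Ioi 0 := by
  have hw : ∀ x ∈ Icc s t, 0 < (γ x).2 := fun x hx ↦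
    hγs.2.trans_le (h.monotoneOn_snd hγ hs (hs.trans_le hx.1) hx.1)
  have hu : MonotoneOn (fun x ↦ (γ x).1) (Icc s t) :=
    monotoneOn_of_hasDerivWithinAt (convex_Icc s t)
      (fun x _ ↦ hasDerivWithinAt_fst (hγ x).hasDerivWithinAt)
      fun x hx ↦ (h.fst_pos_iff.2 (hw x hx)).le
  exact ⟨hγs.1.trans_le (hu (left_mem_Icc.2 hst) (right_mem_Icc.2 hst) hst),
    hw t (right_mem_Icc.2 hst)⟩

theorem snd_le_of_fst_nonpos (h : IsShootingSystem F G)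
    (hγ : IsIntegralCurve γ (planarField F G)) (hst : s ≤ t) (hu : ∀ x ∈ Icc s t, (γ x).1 ≤ 0) :
    (γ t).2 ≤ (γ s).2 :=
  antitoneOn_of_hasDerivWithinAt (convex_Icc s t)
    (fun x _ ↦ hasDerivWithinAt_snd (hγ x).hasDerivWithinAt)
    (fun x hx ↦ (h.snd_eq_zero x _ (hu x hx)).le) (left_mem_Icc.2 hst) (right_mem_Icc.2 hst) hst

theorem negQuadrant_absorbing (h : IsShootingSystem F G)
    (hγ : IsIntegralCurve γ (planarField F G)) (hst : s ≤ t) (hγs : γ s ∈ Iio 0 ×ˢ Iio 0) :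
    γ t ∈ Iio 0 ×ˢ Iio 0 := by
  obtain ⟨hus, hws⟩ := hγs
  have hu : ∀ x, s ≤ x → (γ x).1 < 0 := by
    intro x hsx
    by_contra! hux
    obtain ⟨y, hy, huy, hneg⟩ := exists_first_zero (f := fun x ↦ (γ x).1) hsx
      (continuous_fst.comp hγ.continuous).continuousOn hus hux
    have hu_nonpos : ∀ z ∈ Icc s y, (γ z).1 ≤ 0 := fun z hz ↦
      (eq_or_lt_of_le hz.2).elim (fun h ↦ (h ▸ huy).le) fun h ↦ (hneg z ⟨hz.1, h⟩).le
    have hw_neg : ∀ z ∈ Icc s y, (γ z).2 < 0 := fun z hz ↦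
      (h.snd_le_of_fst_nonpos hγ hz.1 fun r hr ↦ hu_nonpos r ⟨hr.1, hr.2.trans hz.2⟩).trans_lt hws
    have hanti : AntitoneOn (fun x ↦ (γ x).1) (Icc s y) :=
      antitoneOn_of_hasDerivWithinAt (convex_Icc s y)
        (fun z _ ↦ hasDerivWithinAt_fst (hγ z).hasDerivWithinAt)
        fun z hz ↦ (h.fst_neg_iff.2 (hw_neg z hz)).le
    exact (hanti (left_mem_Icc.2 hy.1.le) (right_mem_Icc.2 hy.1.le) hy.1.le |>.trans_lt hus).ne huy
  exact ⟨hu t hst, (h.snd_le_of_fst_nonpos hγ hst fun x hx ↦ (hu x hx.1).le).trans_lt hws⟩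

/-- At a first zero of `u` uniqueness excludes `w = 0`, so `u` and `w` are both negative right
after it. -/
theorem fst_pos_of_notMem_negQuadrant (h : IsShootingSystem F G)
    (hv : IsBoundedLipschitzField (planarField F G)) (hγ : IsIntegralCurve γ (planarField F G))
    (hus : 0 < (γ s).1) (hγs : ∀ t, s ≤ t → γ t ∉ Iio 0 ×ˢ Iio 0) (hst : s ≤ t) :
    0 < (γ t).1 := by
  have hderiv (y : ℝ) : HasDerivAt (fun x ↦ (γ x).1) (F y (γ y).2) y :=
    hasDerivWithinAt_univ.1 (hasDerivWithinAt_fst (hγ y).hasDerivWithinAt)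
  by_contra! hut
  obtain ⟨y, hy, huy, hpos⟩ := exists_first_zero (f := fun x ↦ -(γ x).1) hst
    (continuous_fst.comp hγ.continuous).neg.continuousOn (neg_neg_of_pos hus) (neg_nonneg.2 hut)
  rw [neg_eq_zero] at huy
  have hF : F y (γ y).2 ≤ 0 := neg_nonneg.1 <|
    nonneg_of_hasDerivAt_of_forall_Ico_neg (hderiv y).neg hy.1 (neg_eq_zero.2 huy) hpos
  rcases (h.fst_nonpos_iff.1 hF).eq_or_lt with hwy | hwy
  · have hzero : γ = fun _ ↦ 0 :=
      hv.integralCurve_unique hγ h.isIntegralCurve_zero (Prod.ext huy hwy : γ y = 0)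
    exact hus.ne' (by rw [hzero, Prod.fst_zero])
  · have hsign : ∀ᶠ x in 𝓝 y, SignType.sign (γ x).1 = SignType.sign (y - x) :=
      eventually_nhdsWithin_sign_eq_of_deriv_neg
        ((hderiv y).deriv.symm ▸ h.fst_neg_iff.2 hwy) huy
    have hw : ∀ᶠ x in 𝓝 y, (γ x).2 < 0 :=
      (continuous_snd.comp hγ.continuous).continuousAt.eventually_lt_const hwy
    obtain ⟨x, ⟨hux, hwx⟩, hyx⟩ :=
      (((hsign.and hw).filter_mono nhdsWithin_le_nhds).and self_mem_nhdsWithin :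
        ∀ᶠ x in 𝓝[>] y, _).exists
    rw [sign_neg (sub_neg.2 hyx), sign_eq_neg_one_iff] at hux
    exact hγs x (hy.1.le.trans (le_of_lt hyx)) ⟨hux, hwx⟩

theorem notMem_negQuadrant_of_mem_posQuadrant (h : IsShootingSystem F G)
    (hγ : IsIntegralCurve γ (planarField F G)) (ht : 0 < t) (hγt : γ t ∈ Ioi 0 ×ˢ Ioi 0) (s : ℝ) :
    γ s ∉ Iio 0 ×ˢ Iio 0 := fun hγs ↦
  lt_asymm (mem_Iio.1 (h.negQuadrant_absorbing hγ (le_max_left s t) hγs).1)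
    (mem_Ioi.1 (h.posQuadrant_absorbing hγ ht (le_max_right s t) hγt).1)

theorem exists_trajectory_avoiding_quadrants (h : IsShootingSystem F G)
    (hv : IsBoundedLipschitzField (planarField F G)) {Γ : ℝ → ℝ → ℝ × ℝ} {D : ℝ → ℝ × ℝ}
    (hΓ₀ : ∀ ξ, Γ ξ ξ = D ξ) (hΓ : ∀ ξ, IsIntegralCurve (Γ ξ) (planarField F G))
    (ha : 0 < a) (hab : a ≤ b) (hD : ContinuousOn D (Icc a b))
    (hneg : ∃ t ≥ a, Γ a t ∈ Iio 0 ×ˢ Iio 0) (hpos : D b ∈ Ioi 0 ×ˢ Ioi 0) :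
    ∃ ξ ∈ Icc a b, ∀ t ≥ ξ, Γ ξ t ∉ Iio 0 ×ˢ Iio 0 ∧ Γ ξ t ∉ Ioi 0 ×ˢ Ioi 0 := by
  set P : Set (ℝ × ℝ) := Ioi 0 ×ˢ Ioi 0
  set N : Set (ℝ × ℝ) := Iio 0 ×ˢ Iio 0
  set enters : Set (ℝ × ℝ) → Set (Icc a b) := fun Q ↦ ⋃ T ∈ Ici b, {ξ | Γ ξ T ∈ Q}
  have hopen : ∀ Q, IsOpen Q → IsOpen (enters Q) := fun Q hQ ↦ isOpen_biUnion fun T hT ↦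
    hQ.preimage (continuousOn_iff_continuous_domRestrict.1 (hv.continuousOn_apply hD hT hΓ₀ hΓ))
  have hentersN (ξ : Icc a b) {t : ℝ} (ht : Γ ξ t ∈ N) : ξ ∈ enters N :=
    mem_biUnion (le_max_right t b) (h.negQuadrant_absorbing (hΓ ξ) (le_max_left t b) ht)
  have hentersP (ξ : Icc a b) {t : ℝ} (hξt : ξ ≤ t) (ht : Γ ξ t ∈ P) : ξ ∈ enters P :=
    mem_biUnion (le_max_right t b) (h.posQuadrant_absorbing (hΓ ξ)
      (ha.trans_le (ξ.2.1.trans hξt)) (le_max_left t b) ht)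
  have hdisj : Disjoint (enters N) (enters P) := by
    refine disjoint_left.2 fun ξ hξN hξP ↦ ?_
    obtain ⟨T, -, hT⟩ := mem_iUnion₂.1 hξN
    obtain ⟨T', hbT', hT'⟩ := mem_iUnion₂.1 hξP
    exact h.notMem_negQuadrant_of_mem_posQuadrant (hΓ ξ) (ha.trans_le (hab.trans hbT')) hT' T hT
  have : PreconnectedSpace (Icc a b) := Subtype.preconnectedSpace isPreconnected_Icc
  by_contra! hcon
  have hcover : univ ⊆ enters N ∪ enters P := fun ξ _ ↦ by
    obtain ⟨t, hξt, ht⟩ := hcon ξ ξ.2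
    by_cases htN : Γ ξ t ∈ N
    · exact Or.inl (hentersN ξ htN)
    · exact Or.inr (hentersP ξ hξt (ht htN))
  obtain ⟨t, -, ht⟩ := hneg
  have hbP : Γ b b ∈ P := (hΓ₀ b).symm ▸ hpos
  obtain ⟨ξ, -, hξ⟩ := isPreconnected_univ _ _ (hopen N (isOpen_Iio.prod isOpen_Iio))
    (hopen P (isOpen_Ioi.prod isOpen_Ioi)) hcover
    ⟨⟨a, left_mem_Icc.2 hab⟩, mem_univ _, hentersN _ ht⟩
    ⟨⟨b, right_mem_Icc.2 hab⟩, mem_univ _, hentersP _ le_rfl hbP⟩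
  exact disjoint_left.1 hdisj hξ.1 hξ.2

theorem exists_trajectory_fst_pos_snd_nonpos (h : IsShootingSystem F G)
    (hv : IsBoundedLipschitzField (planarField F G)) {D : ℝ → ℝ × ℝ} (ha : 0 < a) (hab : a ≤ b)
    (hD : ContinuousOn D (Icc a b)) (hD₁ : ∀ ξ ∈ Icc a b, 0 < (D ξ).1) (hDb : 0 < (D b).2)
    (hexit : ∀ γ, IsIntegralCurve γ (planarField F G) → γ a = D a → ∃ t ≥ a, (γ t).1 ≤ 0) :
    ∃ ξ ∈ Icc a b, ∃ γ, IsIntegralCurve γ (planarField F G) ∧ γ ξ = D ξ ∧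
      ∀ t ≥ ξ, 0 < (γ t).1 ∧ (γ t).2 ≤ 0 := by
  choose Γ hΓ₀ hΓ using fun ξ ↦ hv.exists_isIntegralCurve ξ (D ξ)
  have hpos_of_notMem : ∀ ξ ∈ Icc a b, (∀ t ≥ ξ, Γ ξ t ∉ Iio 0 ×ˢ Iio 0) →
      ∀ t ≥ ξ, 0 < (Γ ξ t).1 := fun ξ hξ hN t ht ↦
    h.fst_pos_of_notMem_negQuadrant hv (hΓ ξ) ((hΓ₀ ξ).symm ▸ hD₁ ξ hξ) hN ht
  have hneg : ∃ t ≥ a, Γ a t ∈ Iio 0 ×ˢ Iio 0 := by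
    by_contra! hN
    obtain ⟨t, hat, ht⟩ := hexit (Γ a) (hΓ a) (hΓ₀ a)
    exact ht.not_gt (hpos_of_notMem a (left_mem_Icc.2 hab) hN t hat)
  obtain ⟨ξ, hξ, havoid⟩ := h.exists_trajectory_avoiding_quadrants hv hΓ₀ hΓ ha hab hD hneg
    ⟨hD₁ b (right_mem_Icc.2 hab), hDb⟩
  have hpos := hpos_of_notMem ξ hξ fun t ht ↦ (havoid t ht).1
  exact ⟨ξ, hξ, Γ ξ, hΓ ξ, hΓ₀ ξ, fun t ht ↦
    ⟨hpos t ht, not_lt.1 fun hw ↦ (havoid t ht).2 ⟨hpos t ht, hw⟩⟩⟩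

end IsShootingSystem

variable {p : ℝ → ℝ} {M : ℝ}

/-- The nearest point of the box `[0, M] × [-M, M]`. Composing a locally Lipschitz planar field with
this retraction makes it globally Lipschitz and bounded without changing it on the box. -/
noncomputable def boxRetraction (hM : 0 ≤ M) (q : ℝ × ℝ) : ℝ × ℝ :=
  (projIcc 0 M hM q.1, projIcc (-M) M (neg_le_self hM) q.2)

theorem boxRetraction_of_mem (hM : 0 ≤ M) {q : ℝ × ℝ} (h₁ : q.1 ∈ Icc 0 M)
    (h₂ : q.2 ∈ Icc (-M) M) : boxRetraction hM q = q := by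
  rw [boxRetraction, projIcc_of_mem hM h₁, projIcc_of_mem (neg_le_self hM) h₂]

theorem isBoundedLipschitzField_boxRetraction {v : ℝ → ℝ × ℝ → ℝ × ℝ} (hM : 0 ≤ M)
    (hv : LocallyLipschitz fun z : ℝ × ℝ × ℝ ↦ v z.1 z.2) :
    IsBoundedLipschitzField fun t q ↦ v t (boxRetraction hM q) := by
  set B : Set (ℝ × ℝ) := Icc 0 M ×ˢ Icc (-M) M
  have hmem (q : ℝ × ℝ) : boxRetraction hM q ∈ B := ⟨Subtype.coe_prop _, Subtype.coe_prop _⟩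
  have hcompact (T : ℝ) : IsCompact (Icc (-T) T ×ˢ B) :=
    isCompact_Icc.prod (isCompact_Icc.prod isCompact_Icc)
  have hretraction : LipschitzWith 1 (boxRetraction hM) := by
    have h := (((LipschitzWith.subtype_val _).comp (LipschitzWith.projIcc hM)).comp
      LipschitzWith.prod_fst).prodMk (((LipschitzWith.subtype_val _).comp
        (LipschitzWith.projIcc (neg_le_self hM))).comp LipschitzWith.prod_snd)
    simp only [max_self, mul_one] at h
    exact h
  refine ⟨fun q ↦ hv.continuous.comp (.prodMk_left _), fun T ↦ ?_, fun T ↦ ?_⟩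
  · obtain ⟨K, hK⟩ := hv.locallyLipschitzOn.exists_lipschitzOnWith_of_compact (hcompact T)
    exact ⟨_, fun t ht ↦ lipschitzOnWith_univ.1 <|
      hK.comp ((LipschitzWith.prodMk_left t).comp hretraction).lipschitzOnWith
        fun q _ ↦ ⟨ht, hmem q⟩⟩
  · obtain ⟨L, hL⟩ := (hcompact T).exists_bound_of_continuousOn hv.continuous.continuousOn
    exact ⟨L.toNNReal, fun t ht q ↦ (hL (t, _) ⟨ht, hmem q⟩).trans (le_coe_toNNReal L)⟩

theorem isShootingSystem_truncated (hM : 0 < M) (hp : ∀ t, 0 < p t) (hG₀ : ∀ t, G t 0 = 0)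
    (hG : ∀ t u, 0 < t → 0 ≤ u → 0 ≤ G t u) :
    IsShootingSystem (fun t w ↦ p t * projIcc (-M) M (neg_le_self hM.le) w)
      (fun t u ↦ G t (projIcc 0 M hM.le u)) where
  sign_fst t w := by
    rw [sign_mul, sign_pos (hp t), one_mul, coe_projIcc]
    rcases lt_trichotomy w 0 with hw | rfl | hw
    · rw [sign_neg hw, sign_neg (max_lt (neg_neg_of_pos hM) (min_lt_of_right_lt hw))]
    · rw [min_eq_right hM.le, max_eq_right (neg_nonpos.2 hM.le)]
    · rw [sign_pos hw, sign_pos (lt_max_of_lt_right (lt_min hM hw))]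
  snd_eq_zero t u hu := by rw [projIcc_of_le_left hM.le hu, hG₀]
  snd_nonneg t u ht := hG t _ ht (projIcc 0 M hM.le u).2.1

/-- As long as `u > 0` and `w ≤ 0`, both are monotone, hence stay in the box that contains their
initial values. -/
theorem isIntegralCurveOn_of_truncated (hM : 0 ≤ M) (hp : ∀ t, 0 < p t)
    (hG : ∀ t u, 0 < t → 0 ≤ u → 0 ≤ G t u)
    (hγ : IsIntegralCurve γ fun t q ↦ planarField (fun t w ↦ p t * w) G t (boxRetraction hM q))
    (ha : 0 < a) (hγa : γ a ∈ Iic M ×ˢ Ici (-M)) {S : Set ℝ} (hS : S.OrdConnected) (haS : a ∈ S)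
    (hSa : S ⊆ Ici a) (hpos : ∀ t ∈ S, 0 < (γ t).1) (hneg : ∀ t ∈ S, (γ t).2 ≤ 0) :
    IsIntegralCurveOn γ (planarField (fun t w ↦ p t * w) G) S := by
  have hu : AntitoneOn (fun t ↦ (γ t).1) S :=
    antitoneOn_of_hasDerivWithinAt hS.convex
      (fun t _ ↦ hasDerivWithinAt_fst (hγ t).hasDerivWithinAt) fun t ht ↦
      mul_nonpos_of_nonneg_of_nonpos (hp t).le <| by
        rw [boxRetraction, coe_projIcc]
        exact max_le (neg_nonpos.2 hM) (min_le_of_right_le (hneg t ht))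
  have hw : MonotoneOn (fun t ↦ (γ t).2) S :=
    monotoneOn_of_hasDerivWithinAt hS.convex
      (fun t _ ↦ hasDerivWithinAt_snd (hγ t).hasDerivWithinAt) fun t ht ↦
      hG t _ (ha.trans_le (hSa ht)) (projIcc 0 M hM (γ t).1).2.1
  intro t ht
  have hbox : boxRetraction hM (γ t) = γ t := boxRetraction_of_mem hM
    ⟨(hpos t ht).le, (hu haS ht (hSa ht)).trans hγa.1⟩
    ⟨hγa.2.trans (hw haS ht (hSa ht)), (hneg t ht).trans hM⟩
  have hderiv := (hγ t).hasDerivWithinAt (s := S)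
  dsimp only at hderiv
  rwa [hbox] at hderiv

theorem exists_positive_trajectory {D : ℝ → ℝ × ℝ} (hp : ∀ t, 0 < p t)
    (hv : LocallyLipschitz fun z : ℝ × ℝ × ℝ ↦ planarField (fun t w ↦ p t * w) G z.1 z.2)
    (hG₀ : ∀ t, G t 0 = 0) (hG : ∀ t u, 0 < t → 0 ≤ u → 0 ≤ G t u) (ha : 0 < a) (hab : a ≤ b)
    (hD : ContinuousOn D (Icc a b)) (hD₁ : ∀ ξ ∈ Icc a b, 0 < (D ξ).1) (hDa : (D a).2 < 0)
    (hDb : 0 < (D b).2) (has : a ≤ s)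
    (hturn : ∀ γ, γ a = D a → ∀ t ∈ Ioc a s,
      IsIntegralCurveOn γ (planarField (fun t w ↦ p t * w) G) (Icc a t) →
      (∀ x ∈ Icc a t, 0 < (γ x).1) → (γ t).2 ≠ 0)
    (hexit : ∀ γ, γ a = D a →
      IsIntegralCurveOn γ (planarField (fun t w ↦ p t * w) G) (Icc a s) →
      ¬∀ x ∈ Icc a s, 0 < (γ x).1) :
    ∃ ξ ∈ Icc a b, ∃ γ, IsIntegralCurveOn γ (planarField (fun t w ↦ p t * w) G) (Ici ξ) ∧
      γ ξ = D ξ ∧ ∀ t ≥ ξ, 0 < (γ t).1 ∧ (γ t).2 ≤ 0 := by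
  obtain ⟨M, hM, hDM⟩ : ∃ M, 0 < M ∧ ∀ ξ ∈ Icc a b, D ξ ∈ Iic M ×ˢ Ici (-M) := by
    obtain ⟨C, hC⟩ := isCompact_Icc.exists_bound_of_continuousOn hD
    refine ⟨|C| + 1, by positivity, fun ξ hξ ↦ ?_⟩
    obtain ⟨h₁, h₂⟩ := norm_prod_le_iff.1 ((hC ξ hξ).trans (le_abs_self C))
    exact ⟨(abs_le.1 h₁).2.trans (lt_add_one _).le,
      (neg_le_neg (lt_add_one _).le).trans (abs_le.1 h₂).1⟩
  have hsolves_of_truncated {γ : ℝ → ℝ × ℝ} {ξ : ℝ} {S : Set ℝ} (hξ : ξ ∈ Icc a b)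
      (hγ : IsIntegralCurve γ fun t q ↦
        planarField (fun t w ↦ p t * w) G t (boxRetraction hM.le q))
      (hγξ : γ ξ = D ξ) :=
    isIntegralCurveOn_of_truncated (S := S) hM.le hp hG hγ (ha.trans_le hξ.1) (hγξ ▸ hDM ξ hξ)
  obtain ⟨ξ, hξ, γ, hγ, hγξ, hsign⟩ :=
    (isShootingSystem_truncated hM hp hG₀ hG).exists_trajectory_fst_pos_snd_nonpos
      (isBoundedLipschitzField_boxRetraction hM.le hv) ha hab hD hD₁ hDb fun γ hγ hγa ↦ by
    by_contra! hpos
    have hsolves : ∀ t ≥ a, (∀ x ∈ Icc a t, (γ x).2 ≤ 0) →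
        IsIntegralCurveOn γ (planarField (fun t w ↦ p t * w) G) (Icc a t) := fun t hat ↦
      hsolves_of_truncated (left_mem_Icc.2 hab) hγ hγa ordConnected_Icc (left_mem_Icc.2 hat)
        Icc_subset_Ici_self fun x hx ↦ hpos x hx.1
    have hw : ∀ x ∈ Icc a s, (γ x).2 < 0 := by
      intro x hx
      by_contra! hwx
      obtain ⟨y, hy, hwy, hneg⟩ := exists_first_zero (f := fun x ↦ (γ x).2) hx.1
        (continuous_snd.comp hγ.continuous).continuousOn (hγa ▸ hDa) hwx
      refine hturn γ hγa y ⟨hy.1, hy.2.trans hx.2⟩ (hsolves y hy.1.le fun z hz ↦ ?_)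
        (fun z hz ↦ hpos z hz.1) hwy
      exact (eq_or_lt_of_le hz.2).elim (fun h ↦ (h ▸ hwy).le) fun h ↦ (hneg z ⟨hz.1, h⟩).le
    exact hexit γ hγa (hsolves s has fun x hx ↦ (hw x hx).le) fun x hx ↦ hpos x hx.1
  exact ⟨ξ, hξ, γ, hsolves_of_truncated hξ hγ hγξ ordConnected_Ici self_mem_Ici subset_rfl
    (fun t ht ↦ (hsign t ht).1) fun t ht ↦ (hsign t ht).2, hγξ, hsign⟩

end PlanarShooting

/-! ### Comparison of decaying trajectories -/

section Comparison

variable {p : ℝ → ℝ} {F G : ℝ → ℝ → ℝ} {γ η : ℝ → ℝ × ℝ} {x y z : ℝ}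

theorem hasDerivAt_fst_planarField (hγ : IsIntegralCurveOn γ (planarField F G) (Ioi 0))
    (hx : 0 < x) : HasDerivAt (fun t ↦ (γ t).1) (F x (γ x).2) x :=
  (hasDerivWithinAt_fst (hγ x hx)).hasDerivAt (Ioi_mem_nhds hx)

theorem hasDerivAt_snd_planarField (hγ : IsIntegralCurveOn γ (planarField F G) (Ioi 0))
    (hx : 0 < x) : HasDerivAt (fun t ↦ (γ t).2) (G x (γ x).1) x :=
  (hasDerivWithinAt_snd (hγ x hx)).hasDerivAt (Ioi_mem_nhds hx)

theorem monotoneOn_snd_planarField (hG : ∀ t u, 0 < t → 0 ≤ u → 0 ≤ G t u)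
    (hγ : IsIntegralCurveOn γ (planarField F G) (Ioi 0)) (hpos : ∀ t > 0, 0 < (γ t).1) :
    MonotoneOn (fun t ↦ (γ t).2) (Ioi 0) :=
  monotoneOn_of_hasDerivWithinAt (convex_Ioi 0) (fun t ht ↦ hasDerivWithinAt_snd (hγ t ht))
    fun t ht ↦ hG t _ ht (hpos t ht).le

theorem antitoneOn_fst_planarField (hp : ∀ t > 0, 0 < p t)
    (hγ : IsIntegralCurveOn γ (planarField (fun t w ↦ p t * w) G) (Ioi 0))
    (hneg : ∀ t > 0, (γ t).2 ≤ 0) : AntitoneOn (fun t ↦ (γ t).1) (Ioi 0) :=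
  antitoneOn_of_hasDerivWithinAt (convex_Ioi 0) (fun t ht ↦ hasDerivWithinAt_fst (hγ t ht))
    fun t ht ↦ mul_nonpos_of_nonneg_of_nonpos (hp t ht).le (hneg t ht)

theorem exists_forall_ge_neg_lt_snd (hp : ∀ t > 0, 1 ≤ p t)
    (hG : ∀ t u, 0 < t → 0 ≤ u → 0 ≤ G t u)
    (hγ : IsIntegralCurveOn γ (planarField (fun t w ↦ p t * w) G) (Ioi 0))
    (hpos : ∀ t > 0, 0 < (γ t).1) {e : ℝ} (he : 0 < e) : ∃ X > 0, ∀ t ≥ X, -e < (γ t).2 := by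
  by_contra! hcon
  have hle : ∀ t > 0, (γ t).2 ≤ -e := fun t ht ↦ by
    obtain ⟨y, hty, hy⟩ := hcon t ht
    exact (monotoneOn_snd_planarField hG hγ hpos ht (ht.trans_le hty) hty).trans hy
  have hanti : AntitoneOn (fun t ↦ (γ t).1 + e * t) (Ioi 0) := by
    refine antitoneOn_of_hasDerivWithinAt (convex_Ioi 0) (fun t ht ↦
      (hasDerivWithinAt_fst (hγ t ht)).add ((hasDerivWithinAt_id t _).const_mul e)) fun t ht ↦ ?_
    have hslope : p t * (γ t).2 ≤ 1 * -e :=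
      (mul_le_mul_of_nonneg_left (hle t ht) (zero_le_one.trans (hp t ht))).trans
        (mul_le_mul_of_nonpos_right (hp t ht) (neg_nonpos.2 he.le))
    simp only [planarField]
    linarith
  have hu₁ := hpos 1 one_pos
  have ht : 1 ≤ 1 + (γ 1).1 / e := le_add_of_nonneg_right (by positivity)
  have hdrop := hanti (mem_Ioi.2 one_pos) (one_pos.trans_le ht) ht
  simp only [mul_add, mul_div_cancel₀ _ he.ne'] at hdrop
  linarith [hpos _ (one_pos.trans_le ht)]

/-- The Wronskian `w₁ u₂ - w₂ u₁` of two trajectories `(u₁, w₁)` and `(u₂, w₂)`; up to a positive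
factor it is the derivative of `u₁ / u₂`. -/
def wronskian (γ η : ℝ → ℝ × ℝ) (t : ℝ) : ℝ := (γ t).2 * (η t).1 - (η t).2 * (γ t).1

theorem hasDerivAt_wronskian (hγ : IsIntegralCurveOn γ (planarField (fun t w ↦ p t * w) G) (Ioi 0))
    (hη : IsIntegralCurveOn η (planarField (fun t w ↦ p t * w) G) (Ioi 0)) (hx : 0 < x) :
    HasDerivAt (wronskian γ η) (G x (γ x).1 * (η x).1 - G x (η x).1 * (γ x).1) x :=
  (((hasDerivAt_snd_planarField hγ hx).mul (hasDerivAt_fst_planarField hη hx)).sub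
    ((hasDerivAt_snd_planarField hη hx).mul (hasDerivAt_fst_planarField hγ hx))).congr_deriv
    (by ring)

theorem hasDerivAt_fst_div_fst
    (hγ : IsIntegralCurveOn γ (planarField (fun t w ↦ p t * w) G) (Ioi 0))
    (hη : IsIntegralCurveOn η (planarField (fun t w ↦ p t * w) G) (Ioi 0)) (hx : 0 < x)
    (hηx : 0 < (η x).1) :
    HasDerivAt (fun t ↦ (γ t).1 / (η t).1) (p x / (η x).1 ^ 2 * wronskian γ η x) x :=
  ((hasDerivAt_fst_planarField hγ hx).div (hasDerivAt_fst_planarField hη hx)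
    hηx.ne').congr_deriv (by rw [wronskian]; ring)

section Superlinear

variable (hp : ∀ t > 0, 0 < p t)
  (hsuper : ∀ t > 0, ∀ a b, 0 < b → b < a → G t b * a < G t a * b)
  (hγ : IsIntegralCurveOn γ (planarField (fun t w ↦ p t * w) G) (Ioi 0))
  (hη : IsIntegralCurveOn η (planarField (fun t w ↦ p t * w) G) (Ioi 0))
  (hηpos : ∀ t > 0, 0 < (η t).1)

include hγ hη hηpos

include hp in
/-- At the first crossing of a level between `1` and `u₁ x / u₂ x` the ratio `u₁ / u₂` has a
nonnegative derivative. -/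
theorem exists_lt_wronskian_nonneg
    (hratio : Tendsto (fun t ↦ (γ t).1 / (η t).1) (𝓝[>] 0) (𝓝 1)) (hx : 0 < x)
    (hlt : (η x).1 < (γ x).1) : ∃ y > 0, (η y).1 < (γ y).1 ∧ 0 ≤ wronskian γ η y := by
  set r : ℝ → ℝ := fun t ↦ (γ t).1 / (η t).1
  have hr {t : ℝ} (ht : 0 < t) : HasDerivAt r (p t / (η t).1 ^ 2 * wronskian γ η t) t :=
    hasDerivAt_fst_div_fst hγ hη ht (hηpos t ht)
  obtain ⟨ρ, hρ₁, hρx⟩ := exists_between ((one_lt_div (hηpos x hx)).2 hlt)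
  obtain ⟨x₀, hx₀ρ, hx₀⟩ := ((hratio.eventually_lt_const hρ₁).and (Ioo_mem_nhdsGT hx)).exists
  obtain ⟨y, hy, hyρ, hbelow⟩ := exists_first_zero (f := fun t ↦ r t - ρ) hx₀.2.le
    (fun t ht ↦ ((hr (hx₀.1.trans_le ht.1)).sub_const ρ).continuousAt.continuousWithinAt)
    (sub_neg.2 hx₀ρ) (sub_nonneg.2 hρx.le)
  have hy₀ : 0 < y := hx₀.1.trans hy.1
  have hderiv := nonneg_of_hasDerivAt_of_forall_Ico_neg ((hr hy₀).sub_const ρ) hy.1 hyρ hbelow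
  refine ⟨y, hy₀, (one_lt_div (hηpos y hy₀)).1 (hρ₁.trans_eq (sub_eq_zero.1 hyρ).symm),
    nonneg_of_mul_nonneg_right hderiv (div_pos (hp y hy₀) (pow_pos (hηpos y hy₀) 2))⟩

include hsuper in
theorem monotoneOn_wronskian (hy : 0 < y) (hle : ∀ t ∈ Icc y z, (η t).1 ≤ (γ t).1) :
    MonotoneOn (wronskian γ η) (Icc y z) := by
  refine monotoneOn_of_hasDerivWithinAt (convex_Icc y z) (fun t ht ↦
    (hasDerivAt_wronskian hγ hη (hy.trans_le ht.1)).hasDerivWithinAt) fun t ht ↦ sub_nonneg.2 ?_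
  have ht₀ := hy.trans_le ht.1
  rcases (hle t ht).eq_or_lt with heq | hlt
  · rw [heq]
  · exact (hsuper t ht₀ _ _ (hηpos t ht₀) hlt).le

include hp hsuper

/-- While `u₂ ≤ u₁` the Wronskian increases, and while it is nonnegative so does `u₁ / u₂`. -/
theorem fst_lt_fst_of_wronskian_nonneg (hy : 0 < y) (hlt : (η y).1 < (γ y).1)
    (hW : 0 ≤ wronskian γ η y) (hyz : y ≤ z) : (η z).1 < (γ z).1 := by
  have hpos {t : ℝ} (ht : t ∈ Icc y z) : 0 < t := hy.trans_le ht.1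
  by_contra! hz
  obtain ⟨v, hv, hv₀, hneg⟩ := exists_first_zero (f := fun t ↦ (η t).1 - (γ t).1) hyz
    (fun t ht ↦ ((hasDerivAt_fst_planarField hη (hpos ht)).sub
      (hasDerivAt_fst_planarField hγ (hpos ht))).continuousAt.continuousWithinAt)
    (sub_neg.2 hlt) (sub_nonneg.2 hz)
  have hle : ∀ t ∈ Icc y v, (η t).1 ≤ (γ t).1 := fun t ht ↦
    (eq_or_lt_of_le ht.2).elim (fun h ↦ (sub_eq_zero.1 (h ▸ hv₀)).le) fun h ↦
      (sub_neg.1 (hneg t ⟨ht.1, h⟩)).le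
  have hWnonneg : ∀ t ∈ Icc y v, 0 ≤ wronskian γ η t := fun t ht ↦ hW.trans
    (monotoneOn_wronskian hsuper hγ hη hηpos hy hle (left_mem_Icc.2 hv.1.le) ht ht.1)
  have hratio : MonotoneOn (fun t ↦ (γ t).1 / (η t).1) (Icc y v) :=
    monotoneOn_of_hasDerivWithinAt (convex_Icc y v) (fun t ht ↦
      (hasDerivAt_fst_div_fst hγ hη (hy.trans_le ht.1)
        (hηpos t (hy.trans_le ht.1))).hasDerivWithinAt) fun t ht ↦
      mul_nonneg (div_nonneg (hp t (hy.trans_le ht.1)).le (sq_nonneg _)) (hWnonneg t ht)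
  have hyv : (γ y).1 / (η y).1 ≤ (γ v).1 / (η v).1 :=
    hratio (left_mem_Icc.2 hv.1.le) (right_mem_Icc.2 hv.1.le) hv.1.le
  rw [← sub_eq_zero.1 hv₀, div_self (hηpos v (hy.trans hv.1)).ne'] at hyv
  exact hyv.not_gt ((one_lt_div (hηpos y hy)).2 hlt)

theorem exists_forall_ge_le_wronskian (hy : 0 < y) (hlt : (η y).1 < (γ y).1)
    (hW : 0 ≤ wronskian γ η y) : ∃ e > 0, ∀ z ≥ y + 1, e ≤ wronskian γ η z := by
  have hlt' : ∀ t ≥ y, (η t).1 < (γ t).1 := fun t ht ↦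
    fst_lt_fst_of_wronskian_nonneg hp hsuper hγ hη hηpos hy hlt hW ht
  have hmono : StrictMonoOn (wronskian γ η) (Ici y) := by
    refine strictMonoOn_of_hasDerivWithinAt_pos (convex_Ici y) (fun t ht ↦
      (hasDerivAt_wronskian hγ hη (hy.trans_le ht)).continuousAt.continuousWithinAt) (fun t ht ↦
      (hasDerivAt_wronskian hγ hη (hy.trans_le (interior_subset ht))).hasDerivWithinAt) fun t ht ↦
      sub_pos.2 ?_
    have ht₀ : 0 < t := hy.trans_le (interior_subset ht)
    exact hsuper t ht₀ _ _ (hηpos t ht₀) (hlt' t (interior_subset ht))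
  have hy₁ : y < y + 1 := lt_add_one y
  exact ⟨wronskian γ η (y + 1), hW.trans_lt (hmono self_mem_Ici hy₁.le hy₁), fun z hz ↦
    hmono.monotoneOn hy₁.le (hy₁.le.trans hz) hz⟩

end Superlinear

/-- If `u₂ < u₁` somewhere, then the Wronskian is eventually bounded below by a positive constant,
although it is at most `-w₂ u₁`, where `u₁` is bounded and `w₂` tends to `0`. -/
theorem fst_le_fst_of_tendsto_div (hp : ∀ t > 0, 1 ≤ p t)
    (hG : ∀ t u, 0 < t → 0 ≤ u → 0 ≤ G t u)
    (hsuper : ∀ t > 0, ∀ a b, 0 < b → b < a → G t b * a < G t a * b)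
    (hγ : IsIntegralCurveOn γ (planarField (fun t w ↦ p t * w) G) (Ioi 0))
    (hη : IsIntegralCurveOn η (planarField (fun t w ↦ p t * w) G) (Ioi 0))
    (hγpos : ∀ t > 0, 0 < (γ t).1) (hηpos : ∀ t > 0, 0 < (η t).1) (hγneg : ∀ t > 0, (γ t).2 ≤ 0)
    (hratio : Tendsto (fun t ↦ (γ t).1 / (η t).1) (𝓝[>] 0) (𝓝 1)) (hx : 0 < x) :
    (γ x).1 ≤ (η x).1 := by
  have hp₀ : ∀ t > 0, 0 < p t := fun t ht ↦ one_pos.trans_le (hp t ht)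
  by_contra! hlt
  obtain ⟨y, hy, hylt, hyW⟩ := exists_lt_wronskian_nonneg hp₀ hγ hη hηpos hratio hx hlt
  obtain ⟨e, he, hW⟩ := exists_forall_ge_le_wronskian hp₀ hsuper hγ hη hηpos hy hylt hyW
  obtain ⟨X, hX, hηX⟩ := exists_forall_ge_neg_lt_snd hp hG hη hηpos (div_pos he (hγpos y hy))
  set z := max X (y + 1)
  have hz : 0 < z := hX.trans_le (le_max_left _ _)
  have hyz : y ≤ z := (lt_add_one y).le.trans (le_max_right _ _)
  have hWz : wronskian γ η z < e := calc
    wronskian γ η z ≤ -(η z).2 * (γ z).1 := by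
      rw [wronskian]
      linarith [mul_nonpos_of_nonpos_of_nonneg (hγneg z hz) (hηpos z hz).le]
    _ < e / (γ y).1 * (γ z).1 :=
      mul_lt_mul_of_pos_right (neg_lt.1 (hηX z (le_max_left _ _))) (hγpos z hz)
    _ ≤ e / (γ y).1 * (γ y).1 :=
      mul_le_mul_of_nonneg_left (antitoneOn_fst_planarField hp₀ hγ hγneg hy hz hyz)
        (div_pos he (hγpos y hy)).le
    _ = e := div_mul_cancel₀ e (hγpos y hy).ne'
  exact (hW z (le_max_right _ _)).not_gt hWz

end Comparison

/-! ### The constants -/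

section Constants

variable {n : ℕ}

theorem eps_pos (hn : 1 < n) : 0 < eps n :=
  one_div_pos.2 (sub_pos.2 (Nat.one_lt_cast.2 hn))

theorem cast_mul_eps (hn : 1 < n) : (n : ℝ) * eps n = 1 + eps n := by
  have h : (n : ℝ) - 1 ≠ 0 := (sub_pos.2 (Nat.one_lt_cast.2 hn)).ne'
  rw [eps]
  field_simp
  ring

theorem del_eq (hn : 1 < n) : del n = 1 + 3 * eps n := by
  have h : (n : ℝ) - 1 ≠ 0 := (sub_pos.2 (Nat.one_lt_cast.2 hn)).ne'
  rw [del, eps]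
  field_simp
  ring

theorem del_pos (hn : 1 < n) : 0 < del n := by
  have := eps_pos hn
  rw [del_eq hn]
  positivity

theorem eps_le_one_third (hn : 4 ≤ n) : eps n ≤ 1 / 3 := by
  have h : (4 : ℝ) ≤ n := Nat.ofNat_le_cast.2 hn
  exact one_div_le_one_div_of_le (by norm_num) (by linarith)

theorem kap_pos : 0 < kap := one_div_pos.2 (Real.sqrt_pos.2 Real.pi_pos)

theorem lam_pos (hn : 1 < n) : 0 < lam n := by
  have := del_pos hn
  have := kap_pos
  exact Real.rpow_pos_of_pos (by positivity) _

theorem xi0_pos (hn : 1 < n) : 0 < xi0 n := by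
  have := del_pos hn
  have := eps_pos hn
  exact Real.sqrt_pos.2 (by positivity)

theorem half_one_add_eps_mul_xi0_sq (hn : 1 < n) :
    (1 + eps n) / 2 * xi0 n ^ 2 = del n * (del n + 1) := by
  have := del_pos hn
  have := eps_pos hn
  rw [xi0, Real.sq_sqrt (by positivity), cast_mul_eps hn]
  field_simp

end Constants

/-! ### The error function -/

section ErrorFunction

variable {x : ℝ}

theorem hasDerivAt_exp_sq_div_four (x : ℝ) :
    HasDerivAt (fun y ↦ exp (y ^ 2 / 4)) (x / 2 * exp (x ^ 2 / 4)) x :=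
  ((hasDerivAt_pow 2 x).div_const 4).exp.congr_deriv (by push_cast; ring)

theorem hasDerivAt_exp_neg_sq_div_four (x : ℝ) :
    HasDerivAt (fun y ↦ exp (-(y ^ 2 / 4))) (-(x / 2) * exp (-(x ^ 2 / 4))) x :=
  ((hasDerivAt_pow 2 x).div_const 4).fun_neg.exp.congr_deriv (by push_cast; ring)

theorem hasDerivAt_mu1 (x : ℝ) : HasDerivAt mu1 (kap * exp (-(x ^ 2 / 4))) x := by
  have hcont : Continuous fun σ : ℝ ↦ exp (-σ ^ 2) := by fun_prop
  have hint : HasDerivAt (fun z : ℝ ↦ ∫ σ in (0 : ℝ)..z, exp (-σ ^ 2)) (exp (-(x / 2) ^ 2))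
      (x / 2) := (hcont.integral_hasStrictDerivAt 0 (x / 2)).hasDerivAt
  refine ((hint.comp x ((hasDerivAt_id x).div_const 2)).const_mul (2 / √π)).congr_deriv ?_
  rw [kap, show -(x / 2) ^ 2 = -(x ^ 2 / 4) by ring]
  ring

theorem mu1_zero : mu1 0 = 0 := by
  rw [mu1, zero_div, intervalIntegral.integral_same, mul_zero]

theorem kap_mul_exp_mul_lt_mu1 (hx : 0 < x) :
    kap * x * exp (-(x ^ 2 / 4)) * (1 + x ^ 2 / 6 + x ^ 4 / 60) < mu1 x := by
  have hderiv (y : ℝ) : HasDerivAt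
      (fun y ↦ mu1 y - kap * y * exp (-(y ^ 2 / 4)) * (1 + y ^ 2 / 6 + y ^ 4 / 60))
      (kap * exp (-(y ^ 2 / 4)) * (y ^ 6 / 120)) y := by
    refine ((hasDerivAt_mu1 y).sub ((((hasDerivAt_id y).const_mul kap).mul
      (hasDerivAt_exp_neg_sq_div_four y)).mul ((((hasDerivAt_pow 2 y).div_const 6).const_add 1).add
      ((hasDerivAt_pow 4 y).div_const 60)))).congr_deriv ?_
    simp only [Pi.mul_apply, Pi.add_apply, id]
    push_cast
    ring
  have hmono := strictMonoOn_of_hasDerivWithinAt_pos (convex_Ici (0 : ℝ))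
    (fun y _ ↦ (hderiv y).continuousAt.continuousWithinAt)
    (fun y _ ↦ (hderiv y).hasDerivWithinAt) fun y hy ↦ by
      rw [interior_Ici] at hy
      have := kap_pos
      have : 0 < y := hy
      positivity
  have h := hmono self_mem_Ici hx.le hx
  simp only [mu1_zero, mul_zero, zero_mul, sub_zero] at h
  exact sub_pos.1 h

theorem mu1_pos (hx : 0 < x) : 0 < mu1 x := by
  have := kap_pos
  exact lt_trans (by positivity) (kap_mul_exp_mul_lt_mu1 hx)

theorem mu1_le_kap_mul (hx : 0 ≤ x) : mu1 x ≤ kap * x := by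
  have hmono : MonotoneOn (fun y ↦ kap * y - mu1 y) (Ici 0) :=
    monotoneOn_of_hasDerivWithinAt (convex_Ici 0) (fun y _ ↦
      (((hasDerivAt_id y).const_mul kap).sub (hasDerivAt_mu1 y)).hasDerivWithinAt) fun y _ ↦
      sub_nonneg.2 (mul_le_mul_of_nonneg_left
        (exp_le_one_iff.2 (neg_nonpos.2 (by positivity))) kap_pos.le)
  have h := hmono self_mem_Ici hx hx
  simp only [mu1_zero, mul_zero, sub_zero] at h
  exact sub_nonneg.1 h

/-- The rate `-(log (μ₁ x / x))' / x` at which `μ₁ x / x` decreases, per unit of `x ^ 2 / 2`. -/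
noncomputable def erfRate (x : ℝ) : ℝ :=
  (mu1 x - kap * x * exp (-(x ^ 2 / 4))) / (x ^ 2 * mu1 x)

theorem one_div_lt_erfRate (hx : 0 < x) : 1 / (6 + x ^ 2) < erfRate x := by
  have hμ := mu1_pos hx
  have hlower := kap_mul_exp_mul_lt_mu1 hx
  have hκ := kap_pos
  have hfourth : 0 < kap * x * exp (-(x ^ 2 / 4)) * (x ^ 4 / 60) := by positivity
  rw [erfRate, div_lt_div_iff₀ (by positivity) (by positivity)]
  nlinarith

theorem erfRate_pos (hx : 0 < x) : 0 < erfRate x :=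
  lt_trans (by positivity) (one_div_lt_erfRate hx)

/-- With `P = μ₁ / (x μ₁')` the derivative of `erfRate` has the sign of
`x² P / 2 - (P - 1) (2 P + 1)`, and `1 + x² / 6 + x⁴ / 60` is the lower bound for `P` from
`kap_mul_exp_mul_lt_mu1`. -/
theorem half_mul_le_of_one_add_lt {t P : ℝ} (ht : 0 ≤ t) (hP : 1 + t / 6 + t ^ 2 / 60 < P) :
    t * P / 2 ≤ (P - 1) * (2 * P + 1) := by
  obtain ⟨d, hd, rfl⟩ := exists_pos_add_of_lt' hP
  nlinarith [mul_nonneg ht hd.le, mul_nonneg (pow_nonneg ht 2) hd.le, pow_nonneg ht 2,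
    pow_nonneg ht 3, pow_nonneg ht 4]

theorem antitoneOn_erfRate : AntitoneOn erfRate (Ioi 0) := by
  have hκ := kap_pos
  refine antitoneOn_of_hasDerivWithinAt (convex_Ioi 0) (fun x (hx : 0 < x) ↦
    (((hasDerivAt_mu1 x).sub (((hasDerivAt_id x).const_mul kap).mul
      (hasDerivAt_exp_neg_sq_div_four x))).div ((hasDerivAt_pow 2 x).mul (hasDerivAt_mu1 x))
      (mul_ne_zero (pow_ne_zero 2 hx.ne') (mu1_pos hx).ne')).hasDerivWithinAt)
    fun x (hx : 0 < x) ↦ div_nonpos_of_nonpos_of_nonneg ?_ (sq_nonneg _)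
  simp only [Pi.mul_apply, Pi.sub_apply, id]
  set e := kap * exp (-(x ^ 2 / 4)) with he
  have he₀ : 0 < e := by positivity
  obtain ⟨P, hP⟩ : ∃ P, mu1 x = x * e * P := ⟨mu1 x / (x * e), by field_simp⟩
  have hlower : x * e * (1 + x ^ 2 / 6 + (x ^ 2) ^ 2 / 60) < x * e * P := by
    rw [← hP, he]
    exact lt_of_eq_of_lt (by ring) (kap_mul_exp_mul_lt_mu1 hx)
  have hkey := half_mul_le_of_one_add_lt (sq_nonneg x)
    (lt_of_mul_lt_mul_left hlower (by positivity))
  calc _ = x ^ 3 * e ^ 2 * (x ^ 2 * P / 2 - (P - 1) * (2 * P + 1)) := by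
        rw [hP, he]; push_cast; ring
    _ ≤ 0 := mul_nonpos_of_nonneg_of_nonpos (by positivity) (sub_nonpos.2 hkey)

end ErrorFunction

/-! ### The curve `c₂` -/

section Threshold

variable {n : ℕ} {x ξm s : ℝ}

/-- The coefficient `(2 μ₁ x / x) ^ n` of `m ^ n` in the profile equation multiplied by `x ^ 2`. -/
noncomputable def reactionCoeff (n : ℕ) (x : ℝ) : ℝ := (2 * mu1 x / x) ^ n

theorem reactionCoeff_pos (n : ℕ) (hx : 0 < x) : 0 < reactionCoeff n x := by
  have := mu1_pos hx
  exact pow_pos (by positivity) n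

theorem reactionCoeff_le (n : ℕ) (hx : 0 < x) : reactionCoeff n x ≤ (2 * kap) ^ n := by
  have := mu1_pos hx
  exact pow_le_pow_left₀ (by positivity)
    ((div_le_iff₀ hx).2 (by linarith [mu1_le_kap_mul hx.le])) n

theorem hasDerivAt_reactionCoeff (n : ℕ) (hx : 0 < x) :
    HasDerivAt (reactionCoeff n) (-(n * x * erfRate x * reactionCoeff n x)) x := by
  have hμ := mu1_pos hx
  refine ((((hasDerivAt_mu1 x).const_mul 2).div (hasDerivAt_id x) hx.ne').pow n).congr_deriv ?_
  rcases n with _ | k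
  · simp only [Nat.cast_zero, zero_mul, neg_zero]
  simp only [reactionCoeff, erfRate, Pi.div_apply, id, Nat.add_sub_cancel,
    pow_succ (2 * mu1 x / x)]
  generalize (2 * mu1 x / x) ^ k = z
  field_simp
  ring

theorem antitoneOn_reactionCoeff (n : ℕ) : AntitoneOn (reactionCoeff n) (Ioi 0) :=
  antitoneOn_of_hasDerivWithinAt (convex_Ioi 0)
    (fun x hx ↦ (hasDerivAt_reactionCoeff n hx).hasDerivWithinAt) fun x (hx : 0 < x) ↦ by
      have := reactionCoeff_pos n hx
      have := erfRate_pos hx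
      exact neg_nonpos.2 (by positivity)

/-- The value of `m ^ (n - 1)` at which the reaction term balances the linear term in the
self-adjoint form of the profile equation; it equals `c₂ ^ (n - 1)`. -/
noncomputable def threshold (n : ℕ) (x : ℝ) : ℝ :=
  (1 + eps n) / 2 * (xi0 n ^ 2 - x ^ 2) / reactionCoeff n x

/-- `q' / (x q)` for `q = threshold n`. -/
noncomputable def thresholdRate (n : ℕ) (x : ℝ) : ℝ :=
  n * erfRate x - 2 / (xi0 n ^ 2 - x ^ 2)

theorem xi0_sq_sub_sq_pos (hx : x ∈ Ioo 0 (xi0 n)) : 0 < xi0 n ^ 2 - x ^ 2 :=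
  sub_pos.2 (pow_lt_pow_left₀ hx.2 hx.1.le two_ne_zero)

theorem threshold_pos (hn : 1 < n) (hx : x ∈ Ioo 0 (xi0 n)) : 0 < threshold n x := by
  have := reactionCoeff_pos n hx.1
  have := xi0_sq_sub_sq_pos hx
  have := eps_pos hn
  rw [threshold]
  positivity

theorem hasDerivAt_threshold (hx : x ∈ Ioo 0 (xi0 n)) :
    HasDerivAt (threshold n) (threshold n x * x * thresholdRate n x) x := by
  have hf := reactionCoeff_pos n hx.1
  have hsub := xi0_sq_sub_sq_pos hx
  refine ((((hasDerivAt_pow 2 x).const_sub (xi0 n ^ 2)).const_mul ((1 + eps n) / 2)).div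
    (hasDerivAt_reactionCoeff n hx.1) hf.ne').congr_deriv ?_
  rw [threshold, thresholdRate]
  field_simp
  push_cast
  ring

theorem c2_eq_rpow (hn : 1 < n) (x : ℝ) : c2 n x = threshold n x ^ eps n := by
  rw [c2, threshold, reactionCoeff, cast_mul_eps hn, div_mul_eq_mul_div]

theorem c2_pow_pred (hn : 1 < n) (hx : x ∈ Ioo 0 (xi0 n)) : c2 n x ^ (n - 1) = threshold n x := by
  have hexp : eps n * ((n - 1 : ℕ) : ℝ) = 1 := by
    rw [Nat.cast_sub hn.le, Nat.cast_one]
    linarith [cast_mul_eps hn]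
  rw [c2_eq_rpow hn, ← Real.rpow_natCast, ← Real.rpow_mul (threshold_pos hn hx).le, hexp,
    Real.rpow_one]

theorem hasDerivAt_om1 (n : ℕ) (hx : 0 < x) :
    HasDerivAt (om1 n) (-(reactionCoeff n x / x ^ 3) * (n * x ^ 2 * erfRate x + 2)) x := by
  refine ((hasDerivAt_reactionCoeff n hx).div (hasDerivAt_pow 2 x)
    (pow_pos hx 2).ne').congr_deriv ?_
  field_simp
  push_cast
  ring

theorem hasDerivAt_om2 (n : ℕ) (hx : 0 < x) :
    HasDerivAt (om2 n) (2 * (del n * (del n + 1)) / x ^ 3) x := by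
  refine (((hasDerivAt_const x (del n * (del n + 1))).div (hasDerivAt_pow 2 x)
    (pow_pos hx 2).ne').const_sub ((n : ℝ) * eps n / 2)).congr_deriv ?_
  field_simp
  push_cast
  ring

theorem thresholdRate_eq_zero (hn : 1 < n) (hξm : ξm ∈ Ioo 0 (xi0 n))
    (hchar : deriv (om1 n) ξm * c2 n ξm ^ (n - 1) + deriv (om2 n) ξm = 0) :
    thresholdRate n ξm = 0 := by
  have hξm₀ := hξm.1
  have hf := (reactionCoeff_pos n hξm₀).ne'
  have hsub := xi0_sq_sub_sq_pos hξm
  have hε := eps_pos hn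
  have hfactor : -((1 + eps n) / (2 * ξm)) * (xi0 n ^ 2 - ξm ^ 2) * thresholdRate n ξm = 0 := by
    rw [← hchar, (hasDerivAt_om1 n hξm₀).deriv, (hasDerivAt_om2 n hξm₀).deriv, c2_pow_pred hn hξm,
      ← half_one_add_eps_mul_xi0_sq hn, threshold, thresholdRate]
    field_simp
    ring
  refine (mul_eq_zero.1 hfactor).resolve_left (mul_ne_zero (neg_ne_zero.2 ?_) hsub.ne')
  positivity

theorem strictAntiOn_thresholdRate (n : ℕ) : StrictAntiOn (thresholdRate n) (Ioo 0 (xi0 n)) :=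
  fun _ hx _ hy hxy ↦
    (sub_le_sub_right (mul_le_mul_of_nonneg_left
      (antitoneOn_erfRate hx.1 hy.1 hxy.le) n.cast_nonneg) _).trans_lt
    (sub_lt_sub_left (div_lt_div_of_pos_left two_pos (xi0_sq_sub_sq_pos hy)
      (sub_lt_sub_left (pow_lt_pow_left₀ hxy hx.1.le two_ne_zero) _)) _)

theorem thresholdRate_pos (hξm : ξm ∈ Ioo 0 (xi0 n)) (hrate : thresholdRate n ξm = 0)
    (hx : x ∈ Ioo 0 ξm) : 0 < thresholdRate n x :=
  hrate ▸ strictAntiOn_thresholdRate n ⟨hx.1, hx.2.trans hξm.2⟩ hξm hx.2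

theorem sqrt_two_mul_del_mem_Ioo (hn : 1 < n) : √(2 * del n) ∈ Ioo 0 (xi0 n) := by
  have hε := eps_pos hn
  have hδ := del_pos hn
  refine ⟨Real.sqrt_pos.2 (by positivity), (Real.sqrt_lt' (xi0_pos hn)).2 ?_⟩
  have hξ := half_one_add_eps_mul_xi0_sq hn
  rw [del_eq hn] at hξ ⊢
  nlinarith

theorem thresholdRate_sqrt_two_mul_del_pos (hn : 4 ≤ n) : 0 < thresholdRate n √(2 * del n) := by
  have hn₁ : 1 < n := by omega
  have hε := eps_pos hn₁
  have hδ := del_pos hn₁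
  have hmem := sqrt_two_mul_del_mem_Ioo hn₁
  have hsub := xi0_sq_sub_sq_pos hmem
  have hrate := mul_lt_mul_of_pos_left (one_div_lt_erfRate hmem.1) (show 0 < (n : ℝ) by positivity)
  rw [thresholdRate]
  rw [Real.sq_sqrt (by positivity)] at hsub hrate ⊢
  refine sub_pos.2 (lt_of_le_of_lt ?_ hrate)
  rw [mul_one_div, div_le_div_iff₀ hsub (by positivity)]
  refine le_of_mul_le_mul_left ?_ hε
  calc eps n * (2 * (6 + 2 * del n))
      ≤ 2 * del n * (del n - eps n) := by
        rw [del_eq hn₁]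
        linarith [eps_le_one_third hn]
    _ = 2 * ((1 + eps n) / 2 * xi0 n ^ 2 - (1 + eps n) * del n) := by
        rw [half_one_add_eps_mul_xi0_sq hn₁]
        ring
    _ = eps n * (n * (xi0 n ^ 2 - 2 * del n)) := by
        rw [← cast_mul_eps hn₁]
        ring

theorem sqrt_two_mul_del_lt (hn : 4 ≤ n) (hξm : ξm ∈ Ioo 0 (xi0 n))
    (hrate : thresholdRate n ξm = 0) : √(2 * del n) < ξm := by
  by_contra! hle
  exact (thresholdRate_sqrt_two_mul_del_pos hn).not_ge <| hrate ▸
    (strictAntiOn_thresholdRate n).antitoneOn hξm (sqrt_two_mul_del_mem_Ioo (by omega)) hle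

theorem exists_mul_sq_sub_sq_le_threshold_sub (hn : 1 < n) (hs : s ∈ Ioo 0 (xi0 n))
    (hrate : 0 < thresholdRate n s) :
    ∃ c > 0, ∀ a t, 0 < a → a ≤ t → t ≤ s →
      c * (t ^ 2 - a ^ 2) ≤ threshold n t - threshold n a := by
  have hκ := kap_pos
  have hε := eps_pos hn
  have hsub := xi0_sq_sub_sq_pos hs
  set q₀ := (1 + eps n) / 2 * (xi0 n ^ 2 - s ^ 2) / (2 * kap) ^ n
  have : 0 < q₀ := by positivity
  have hmem {x : ℝ} (hx : x ∈ Ioc 0 s) : x ∈ Ioo 0 (xi0 n) := ⟨hx.1, hx.2.trans_lt hs.2⟩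
  have hq₀_le {x : ℝ} (hx : x ∈ Ioc 0 s) : q₀ ≤ threshold n x := by
    have := xi0_sq_sub_sq_pos (hmem hx)
    have := pow_le_pow_left₀ hx.1.le hx.2 2
    exact div_le_div₀ (by positivity) (by gcongr) (reactionCoeff_pos n hx.1)
      (reactionCoeff_le n hx.1)
  have hmono : MonotoneOn (fun x ↦ threshold n x - q₀ * thresholdRate n s / 2 * x ^ 2)
      (Ioc 0 s) := by
    refine monotoneOn_of_hasDerivWithinAt (convex_Ioc 0 s) (fun x hx ↦
      ((hasDerivAt_threshold (hmem hx)).sub ((hasDerivAt_pow 2 x).const_mul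
        (q₀ * thresholdRate n s / 2))).hasDerivWithinAt) fun x hx ↦ sub_nonneg.2 ?_
    calc q₀ * thresholdRate n s / 2 * ((2 : ℕ) * x ^ (2 - 1))
        = q₀ * x * thresholdRate n s := by push_cast; ring
      _ ≤ threshold n x * x * thresholdRate n x :=
        mul_le_mul (mul_le_mul_of_nonneg_right (hq₀_le hx) hx.1.le)
          ((strictAntiOn_thresholdRate n).antitoneOn (hmem hx) hs hx.2) hrate.le
          (mul_nonneg (threshold_pos hn (hmem hx)).le hx.1.le)
  refine ⟨q₀ * thresholdRate n s / 2, by positivity, fun a t ha hat hts ↦ ?_⟩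
  have h := hmono ⟨ha, hat.trans hts⟩ ⟨ha.trans_le hat, hts⟩ hat
  simp only at h
  linarith

theorem monotoneOn_threshold (hn : 1 < n) (hs : s ∈ Ioo 0 (xi0 n))
    (hrate : 0 < thresholdRate n s) : MonotoneOn (threshold n) (Ioc 0 s) := by
  obtain ⟨c, hc, hgrowth⟩ := exists_mul_sq_sub_sq_le_threshold_sub hn hs hrate
  exact fun a ha t ht hat ↦ sub_nonneg.1 <|
    (mul_nonneg hc.le (sub_nonneg.2 (pow_le_pow_left₀ ha.1.le hat 2))).trans
      (hgrowth a t ha.1 hat ht.2)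

end Threshold

/-! ### The profile equation -/

section Profile

variable {n : ℕ} {x r s : ℝ} {S : Set ℝ} {γ : ℝ → ℝ × ℝ}

/-- The equation for `m = y ^ δ μ₂` as a first-order field in `(m, m')`. -/
noncomputable def profileField (n : ℕ) (x : ℝ) (q : ℝ × ℝ) : ℝ × ℝ :=
  (q.2, 1 / x ^ 2 * (2 * mu1 x * q.1 / x) ^ n - (x / 2 - 2 * del n / x) * q.2
    - (del n * (del n + 1) / x ^ 2 - (del n / 2 - eps n)) * q.1)

theorem reaction_sub_linear_eq (hn : 1 < n) (hx : 0 < x) (m : ℝ) :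
    1 / x ^ 2 * (2 * mu1 x * m / x) ^ n - (del n * (del n + 1) / x ^ 2 - (del n / 2 - eps n)) * m
      = reactionCoeff n x / x ^ 2 * (m * (m ^ (n - 1) - threshold n x)) := by
  have hf := (reactionCoeff_pos n hx).ne'
  have hpow : reactionCoeff n x * m ^ n = (2 * mu1 x * m / x) ^ n := by
    rw [reactionCoeff, ← mul_pow]
    ring
  have hlin : del n * (del n + 1) / x ^ 2 - (del n / 2 - eps n)
      = reactionCoeff n x / x ^ 2 * threshold n x := by
    rw [← half_one_add_eps_mul_xi0_sq hn, del_eq hn, threshold]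
    field_simp
    ring
  rw [hlin, ← hpow, ← mul_pow_sub_one (Nat.ne_zero_of_lt hn) m]
  ring

/-- The integrating factor `x ^ (-2 δ) exp (x² / 4)` of the profile equation. -/
noncomputable def fluxWeight (n : ℕ) (x : ℝ) : ℝ := exp (x ^ 2 / 4) * x ^ (-(2 * del n))

/-- The flux `x ^ (-2 δ) exp (x² / 4) m'`, in terms of which the profile equation is
self-adjoint. -/
noncomputable def flux (n : ℕ) (γ : ℝ → ℝ × ℝ) (x : ℝ) : ℝ := fluxWeight n x * (γ x).2

theorem fluxWeight_pos (n : ℕ) (hx : 0 < x) : 0 < fluxWeight n x := by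
  rw [fluxWeight]
  positivity

theorem one_div_sq_le_fluxWeight (hn : 1 < n) (hx : 0 < x) (hx₁ : x ≤ 1) :
    1 / x ^ 2 ≤ fluxWeight n x := by
  have hexp : -(2 * del n) ≤ -2 := by linarith [del_eq hn, eps_pos hn]
  calc 1 / x ^ 2 = 1 * x ^ (-2 : ℝ) := by
        rw [Real.rpow_neg hx.le, Real.rpow_ofNat, one_mul, one_div]
    _ ≤ fluxWeight n x := mul_le_mul (Real.one_le_exp (by positivity))
        (Real.rpow_le_rpow_of_exponent_ge hx hx₁ hexp) (by positivity) (by positivity)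

theorem fluxWeight_le (hn : 1 < n) (hr : 0 < r) (hrx : r ≤ x) (hxs : x ≤ s) :
    fluxWeight n x ≤ exp (s ^ 2 / 4) * r ^ (-(2 * del n)) := by
  have hx := hr.trans_le hrx
  have hδ := del_pos hn
  exact mul_le_mul (exp_le_exp.2 (by gcongr))
    (Real.rpow_le_rpow_of_nonpos hr hrx (by linarith)) (by positivity) (by positivity)

theorem hasDerivAt_rpow_mul_div (p : ℝ) (hx : 0 < x) :
    HasDerivAt (fun y : ℝ ↦ y ^ p) (p / x * x ^ p) x := by
  refine (Real.hasDerivAt_rpow_const (.inl hx.ne')).congr_deriv ?_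
  rw [Real.rpow_sub_one hx.ne']
  ring

theorem hasDerivAt_fluxWeight (n : ℕ) (hx : 0 < x) :
    HasDerivAt (fluxWeight n) (fluxWeight n x * (x / 2 - 2 * del n / x)) x :=
  ((hasDerivAt_exp_sq_div_four x).mul (hasDerivAt_rpow_mul_div _ hx)).congr_deriv (by
    rw [fluxWeight]
    ring)

theorem hasDerivWithinAt_flux (hn : 1 < n) (hγ : IsIntegralCurveOn γ (profileField n) S)
    (hxS : x ∈ S) (hx : 0 < x) :
    HasDerivWithinAt (flux n γ) (fluxWeight n x * (reactionCoeff n x / x ^ 2 *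
      ((γ x).1 * ((γ x).1 ^ (n - 1) - threshold n x)))) S x := by
  refine ((hasDerivAt_fluxWeight n hx).hasDerivWithinAt.mul
    (hasDerivWithinAt_snd (hγ x hxS))).congr_deriv ?_
  rw [← reaction_sub_linear_eq hn hx, profileField]
  ring

theorem fluxWeight_mul_reaction_le (hn : 1 < n) (hx : 0 < x) (hx₁ : x ≤ 1) (hxs : x ≤ s)
    {ℓ d m : ℝ} (hℓ : 0 ≤ ℓ) (hd : 0 ≤ d) (hm : ℓ ≤ m)
    (hmx : d * x ^ 2 ≤ threshold n x - m ^ (n - 1)) :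
    fluxWeight n x * (reactionCoeff n x / x ^ 2 * (m * (m ^ (n - 1) - threshold n x)))
      ≤ -(reactionCoeff n s * (ℓ * d) / x ^ 2) := by
  have hw := fluxWeight_pos n hx
  have hfx := reactionCoeff_pos n hx
  have hfs := reactionCoeff_pos n (hx.trans_le hxs)
  have hm₀ := hℓ.trans hm
  have hw_le := one_div_sq_le_fluxWeight hn hx hx₁
  have hf_le : reactionCoeff n s ≤ reactionCoeff n x :=
    antitoneOn_reactionCoeff n hx (hx.trans_le hxs) hxs
  rw [← neg_sub (threshold n x), mul_neg, mul_neg, mul_neg]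
  refine neg_le_neg ?_
  calc reactionCoeff n s * (ℓ * d) / x ^ 2
      = 1 / x ^ 2 * (reactionCoeff n s / x ^ 2 * (ℓ * (d * x ^ 2))) := by
        field_simp
    _ ≤ fluxWeight n x *
        (reactionCoeff n x / x ^ 2 * (m * (threshold n x - m ^ (n - 1)))) := by
        gcongr

end Profile

/-! ### Descents below `c₂` -/

section Descent

variable {n : ℕ} {a s t x ℓ C : ℝ} {γ : ℝ → ℝ × ℝ}

/-- `γ = (m, m')` is a positive trajectory of the profile equation on `[a, s]` which starts at
rest from a height below `c₂ a`. -/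
structure IsDescentOn (n : ℕ) (a s : ℝ) (γ : ℝ → ℝ × ℝ) : Prop where
  pos_left : 0 < a
  isIntegralCurveOn : IsIntegralCurveOn γ (profileField n) (Icc a s)
  fst_pos : ∀ x ∈ Icc a s, 0 < (γ x).1
  snd_left : (γ a).2 = 0
  fst_pow_lt_left : (γ a).1 ^ (n - 1) < threshold n a

namespace IsDescentOn

theorem mono (h : IsDescentOn n a s γ) (hts : t ≤ s) : IsDescentOn n a t γ :=
  ⟨h.pos_left, h.isIntegralCurveOn.mono (Icc_subset_Icc_right hts),
    fun x hx ↦ h.fst_pos x ⟨hx.1, hx.2.trans hts⟩, h.snd_left, h.fst_pow_lt_left⟩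

theorem antitoneOn_flux_of_le (h : IsDescentOn n a s γ) (hn : 1 < n)
    (hle : ∀ x ∈ Icc a s, (γ x).1 ^ (n - 1) ≤ threshold n x) : AntitoneOn (flux n γ) (Icc a s) :=
  antitoneOn_of_hasDerivWithinAt (convex_Icc a s)
    (fun _ hx ↦ hasDerivWithinAt_flux hn h.isIntegralCurveOn hx (h.pos_left.trans_le hx.1))
    fun x hx ↦ by
      have hx₀ := h.pos_left.trans_le hx.1
      have hf := reactionCoeff_pos n hx₀
      exact mul_nonpos_of_nonneg_of_nonpos (fluxWeight_pos n hx₀).le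
        (mul_nonpos_of_nonneg_of_nonpos (by positivity)
          (mul_nonpos_of_nonneg_of_nonpos (h.fst_pos x hx).le (sub_nonpos.2 (hle x hx))))

theorem flux_left (h : IsDescentOn n a s γ) : flux n γ a = 0 := by
  rw [flux, h.snd_left, mul_zero]

theorem snd_nonpos_of_le (h : IsDescentOn n a s γ) (hn : 1 < n)
    (hle : ∀ x ∈ Icc a s, (γ x).1 ^ (n - 1) ≤ threshold n x) (hx : x ∈ Icc a s) :
    (γ x).2 ≤ 0 := by
  have hflux := h.antitoneOn_flux_of_le hn hle (left_mem_Icc.2 (hx.1.trans hx.2)) hx hx.1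
  rw [h.flux_left] at hflux
  exact nonpos_of_mul_nonpos_right hflux (fluxWeight_pos n (h.pos_left.trans_le hx.1))

theorem antitoneOn_fst_of_le (h : IsDescentOn n a s γ) (hn : 1 < n)
    (hle : ∀ x ∈ Icc a s, (γ x).1 ^ (n - 1) ≤ threshold n x) :
    AntitoneOn (fun x ↦ (γ x).1) (Icc a s) :=
  antitoneOn_of_hasDerivWithinAt (convex_Icc a s)
    (fun _ hx ↦ hasDerivWithinAt_fst (h.isIntegralCurveOn _ hx))
    fun _ hx ↦ h.snd_nonpos_of_le hn hle hx

theorem continuousOn_fst (h : IsDescentOn n a s γ) : ContinuousOn (fun x ↦ (γ x).1) (Icc a s) :=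
  h.isIntegralCurveOn.continuousOn.fst

theorem fst_pow_lt (h : IsDescentOn n a s γ) (hn : 1 < n)
    (hq : MonotoneOn (threshold n) (Icc a s)) (hx : x ∈ Icc a s) :
    (γ x).1 ^ (n - 1) < threshold n a := by
  by_contra! hcon
  obtain ⟨y, hy, hzero, hneg⟩ := exists_first_zero hx.1
    (((h.mono hx.2).continuousOn_fst.pow (n - 1)).sub (continuousOn_const (c := threshold n a)))
    (sub_neg.2 h.fst_pow_lt_left) (sub_nonneg.2 hcon)
  have hya := sub_eq_zero.1 hzero
  have hys := hy.2.trans hx.2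
  have has := left_mem_Icc.2 (hx.1.trans hx.2)
  have hle : ∀ t ∈ Icc a y, (γ t).1 ^ (n - 1) ≤ threshold n t := fun t ht ↦
    (ht.2.eq_or_lt.elim (fun hty ↦ hty ▸ hya.le) fun hty ↦
      (sub_neg.1 (hneg t ⟨ht.1, hty⟩)).le).trans (hq has ⟨ht.1, ht.2.trans hys⟩ ht.1)
  have hanti := (h.mono hys).antitoneOn_fst_of_le hn hle (left_mem_Icc.2 hy.1.le)
    (right_mem_Icc.2 hy.1.le) hy.1.le
  have hpow := pow_le_pow_left₀ (h.fst_pos y ⟨hy.1.le, hys⟩).le hanti (n - 1)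
  exact (hpow.trans_lt h.fst_pow_lt_left).ne hya

theorem fst_pow_lt_threshold (h : IsDescentOn n a s γ) (hn : 1 < n)
    (hq : MonotoneOn (threshold n) (Icc a s)) (hx : x ∈ Icc a s) :
    (γ x).1 ^ (n - 1) < threshold n x :=
  (h.fst_pow_lt hn hq hx).trans_le (hq (left_mem_Icc.2 (hx.1.trans hx.2)) hx hx.1)

theorem antitoneOn_fst (h : IsDescentOn n a s γ) (hn : 1 < n)
    (hq : MonotoneOn (threshold n) (Icc a s)) : AntitoneOn (fun x ↦ (γ x).1) (Icc a s) :=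
  h.antitoneOn_fst_of_le hn fun _ hx ↦ (h.fst_pow_lt_threshold hn hq hx).le

theorem antitoneOn_flux (h : IsDescentOn n a s γ) (hn : 1 < n)
    (hq : MonotoneOn (threshold n) (Icc a s)) : AntitoneOn (flux n γ) (Icc a s) :=
  h.antitoneOn_flux_of_le hn fun _ hx ↦ (h.fst_pow_lt_threshold hn hq hx).le

theorem snd_nonpos (h : IsDescentOn n a s γ) (hn : 1 < n)
    (hq : MonotoneOn (threshold n) (Icc a s)) (hx : x ∈ Icc a s) : (γ x).2 ≤ 0 :=
  h.snd_nonpos_of_le hn (fun _ hx ↦ (h.fst_pow_lt_threshold hn hq hx).le) hx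

theorem snd_neg (h : IsDescentOn n a s γ) (hn : 1 < n)
    (hq : MonotoneOn (threshold n) (Icc a s)) (hx : x ∈ Ioc a s) : (γ x).2 < 0 := by
  have hderiv {y : ℝ} (hy : y ∈ Icc a s) :=
    hasDerivWithinAt_flux hn h.isIntegralCurveOn hy (h.pos_left.trans_le hy.1)
  have hanti : StrictAntiOn (flux n γ) (Icc a s) :=
    strictAntiOn_of_hasDerivWithinAt_neg (convex_Icc a s)
      (fun y hy ↦ (hderiv hy).continuousWithinAt)
      (fun y hy ↦ (hderiv (interior_subset hy)).mono interior_subset) fun y hy ↦ by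
        replace hy := interior_subset hy
        have hy₀ := h.pos_left.trans_le hy.1
        have hf := reactionCoeff_pos n hy₀
        exact mul_neg_of_pos_of_neg (fluxWeight_pos n hy₀) (mul_neg_of_pos_of_neg (by positivity)
          (mul_neg_of_pos_of_neg (h.fst_pos y hy)
            (sub_neg.2 (h.fst_pow_lt_threshold hn hq hy))))
  have hflux := hanti (left_mem_Icc.2 (hx.1.le.trans hx.2)) (Ioc_subset_Icc_self hx) hx.1
  rw [h.flux_left] at hflux
  exact neg_of_mul_neg_right hflux (fluxWeight_pos n (h.pos_left.trans hx.1)).le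

theorem monotoneOn_threshold_Icc (h : IsDescentOn n a s γ)
    (hq : MonotoneOn (threshold n) (Ioc 0 s)) : MonotoneOn (threshold n) (Icc a s) :=
  hq.mono fun _ hx ↦ ⟨h.pos_left.trans_le hx.1, hx.2⟩

theorem fst_le_one_add_threshold (h : IsDescentOn n a s γ) (hn : 2 < n) (hs : s ∈ Ioo 0 (xi0 n))
    (hq : MonotoneOn (threshold n) (Icc a s)) (hx : x ∈ Icc a s) :
    (γ x).1 ≤ 1 + threshold n s := by
  have hn₁ : 1 < n := by omega
  have hqs := threshold_pos hn₁ hs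
  by_contra! hcon
  have hself : (γ x).1 ≤ (γ x).1 ^ (n - 1) := le_self_pow₀ (by linarith) (by omega)
  have hlt := h.fst_pow_lt_threshold hn₁ hq hx
  linarith [hq hx (right_mem_Icc.2 (hx.1.trans hx.2)) hx.2]

end IsDescentOn

theorem exists_forall_neg_flux_le (hn : 2 < n) (hs : s ∈ Ioo 0 (xi0 n))
    (hq : MonotoneOn (threshold n) (Ioc 0 s)) :
    ∃ C > 0, ∀ a γ, IsDescentOn n a s γ → ∀ x ∈ Icc a (s / 2), -flux n γ x ≤ C := by
  have hn₁ : 1 < n := by omega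
  have hs₀ := hs.1
  have hqs := threshold_pos hn₁ hs
  set W := exp (s ^ 2 / 4) * (s / 2) ^ (-(2 * del n))
  have hW : 0 < W := by positivity
  refine ⟨(1 + threshold n s) * W / (s / 2), by positivity, fun a γ h x hx ↦ ?_⟩
  replace hq := h.monotoneOn_threshold_Icc hq
  have hhalf : s / 2 ∈ Icc a s := ⟨hx.1.trans hx.2, by linarith⟩
  have hslope : ∀ y ∈ Icc (s / 2) s, (γ y).2 ≤ flux n γ (s / 2) / W := by
    intro y hy
    have hya : y ∈ Icc a s := ⟨hhalf.1.trans hy.1, hy.2⟩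
    rw [le_div_iff₀' hW]
    calc W * (γ y).2 ≤ fluxWeight n y * (γ y).2 := mul_le_mul_of_nonpos_right
          (fluxWeight_le hn₁ (half_pos hs₀) hy.1 hy.2) (h.snd_nonpos hn₁ hq hya)
      _ ≤ flux n γ (s / 2) := h.antitoneOn_flux hn₁ hq hhalf hya hy.1
  have hdrop := sub_le_mul_sub_of_hasDerivWithinAt_le hhalf.2 (Icc_subset_Icc_left hhalf.1)
    (fun y hy ↦ hasDerivWithinAt_fst (h.isIntegralCurveOn y ⟨hhalf.1.trans hy.1, hy.2⟩)) hslope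
  have hm := h.fst_le_one_add_threshold hn hs hq hhalf
  have hms := h.fst_pos s (right_mem_Icc.2 (hhalf.1.trans hhalf.2))
  calc -flux n γ x ≤ -flux n γ (s / 2) := neg_le_neg
        (h.antitoneOn_flux hn₁ hq ⟨hx.1, hx.2.trans hhalf.2⟩ hhalf hx.2)
    _ = -(flux n γ (s / 2) / W * (s - s / 2)) * W / (s / 2) := by
        field_simp
        ring
    _ ≤ (1 + threshold n s) * W / (s / 2) := by
        gcongr
        linarith

namespace IsDescentOn

theorem half_le_fst_four_mul (h : IsDescentOn n a s γ) (hn : 1 < n)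
    (hq : MonotoneOn (threshold n) (Icc a s)) (hC : ∀ x ∈ Icc a (4 * a), -flux n γ x ≤ C)
    (has : 4 * a ≤ s) (ha : 4 * a ≤ 1) (hCℓ : 6 * C * a ≤ ℓ) (hℓ : ℓ ≤ (γ a).1) :
    ℓ / 2 ≤ (γ (4 * a)).1 := by
  have ha₀ := h.pos_left
  have ha₄ : a ≤ 4 * a := by linarith
  have hslope : ∀ x ∈ Icc a (4 * a), -(γ x).2 ≤ C := by
    intro x hx
    have hx₀ := ha₀.trans_le hx.1
    have hx₁ := hx.2.trans ha
    have hm := h.snd_nonpos hn hq ⟨hx.1, hx.2.trans has⟩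
    have hweight : 1 ≤ fluxWeight n x :=
      ((one_le_div (by positivity)).2 (pow_le_one₀ hx₀.le hx₁)).trans
        (one_div_sq_le_fluxWeight hn hx₀ hx₁)
    calc -(γ x).2 ≤ fluxWeight n x * -(γ x).2 :=
          le_mul_of_one_le_left (neg_nonneg.2 hm) hweight
      _ = -flux n γ x := by rw [flux, mul_neg]
      _ ≤ C := hC x hx
  have hdrop := sub_le_mul_sub_of_hasDerivWithinAt_le ha₄ (Icc_subset_Icc_right has)
    (fun y hy ↦ (hasDerivWithinAt_fst (h.isIntegralCurveOn y ⟨hy.1, hy.2.trans has⟩)).fun_neg)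
    hslope
  linarith

theorem mul_le_of_le_fst_four_mul (h : IsDescentOn n a s γ) (hn : 1 < n)
    (hq : MonotoneOn (threshold n) (Icc a s)) (hC : ∀ x ∈ Icc a (4 * a), -flux n γ x ≤ C)
    {c : ℝ} (hc : 0 ≤ c)
    (hgrowth : ∀ x ∈ Icc a (4 * a), c * (x ^ 2 - a ^ 2) ≤ threshold n x - threshold n a)
    (has : 4 * a ≤ s) (ha : 4 * a ≤ 1) (hℓ₀ : 0 ≤ ℓ) (hℓ : ℓ ≤ (γ (4 * a)).1) :
    reactionCoeff n s * (ℓ * (c * (3 / 4))) ≤ 8 * C * a := by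
  have ha₀ := h.pos_left
  have ha₂ : 2 * a ≤ 4 * a := by linarith
  have hsub : Icc (2 * a) (4 * a) ⊆ Icc a s := Icc_subset_Icc (by linarith) has
  set K := reactionCoeff n s * (ℓ * (c * (3 / 4)))
  have hslope : ∀ x ∈ Icc (2 * a) (4 * a), fluxWeight n x * (reactionCoeff n x / x ^ 2 *
      ((γ x).1 * ((γ x).1 ^ (n - 1) - threshold n x))) ≤ -(K / (4 * a) ^ 2) := by
    intro x hx
    have hx₀ : 0 < x := by linarith [hx.1]
    have hx₁ := hx.2.trans ha
    have hmx : ℓ ≤ (γ x).1 := hℓ.trans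
      (h.antitoneOn_fst hn hq (hsub hx) (hsub (right_mem_Icc.2 ha₂)) hx.2)
    have hqx : c * (3 / 4) * x ^ 2 ≤ threshold n x - (γ x).1 ^ (n - 1) := by
      have hax : (2 * a) ^ 2 ≤ x ^ 2 := pow_le_pow_left₀ (by positivity) hx.1 2
      nlinarith [hgrowth x ⟨(hsub hx).1, hx.2⟩, h.fst_pow_lt hn hq (hsub hx)]
    calc _ ≤ -(K / x ^ 2) := fluxWeight_mul_reaction_le hn hx₀ hx₁ (hsub hx).2 hℓ₀
          (by positivity) hmx hqx
      _ ≤ -(K / (4 * a) ^ 2) := by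
          have := hx.2
          have := (reactionCoeff_pos n (hx₀.trans_le (hsub hx).2)).le
          gcongr
  have hdrop := sub_le_mul_sub_of_hasDerivWithinAt_le ha₂ hsub
    (fun y hy ↦ hasDerivWithinAt_flux hn h.isIntegralCurveOn (hsub hy)
      (ha₀.trans_le (hsub hy).1)) hslope
  have hflux₂ : flux n γ (2 * a) ≤ 0 := h.flux_left ▸ h.antitoneOn_flux hn hq
    (left_mem_Icc.2 (by linarith)) (hsub (left_mem_Icc.2 ha₂)) (by linarith)
  have hflux₄ := hC (4 * a) (right_mem_Icc.2 (by linarith))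
  have hle : K / (8 * a) ≤ C := calc
    K / (8 * a) = -(-(K / (4 * a) ^ 2) * (4 * a - 2 * a)) := by
      field_simp
      ring
    _ ≤ C := by linarith
  rw [div_le_iff₀ (by positivity)] at hle
  linarith

end IsDescentOn

theorem exists_forall_isDescentOn_fst_lt (hn : 2 < n) (hs : s ∈ Ioo 0 (xi0 n))
    (hrate : 0 < thresholdRate n s) (hℓ : 0 < ℓ) :
    ∃ r > 0, ∀ a < r, ∀ γ, IsDescentOn n a s γ → (γ a).1 < ℓ := by
  have hn₁ : 1 < n := by omega
  obtain ⟨c, hc, hgrowth⟩ := exists_mul_sq_sub_sq_le_threshold_sub hn₁ hs hrate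
  have hmono := monotoneOn_threshold hn₁ hs hrate
  obtain ⟨C, hC, hflux⟩ := exists_forall_neg_flux_le hn hs hmono
  have hs₀ := hs.1
  have hfs := reactionCoeff_pos n hs₀
  set K := reactionCoeff n s * (ℓ / 2 * (c * (3 / 4)))
  have : 0 < K := by positivity
  refine ⟨min (min (s / 8) (1 / 4)) (min (ℓ / (6 * C)) (K / (8 * C))), by positivity,
    fun a ha γ h ↦ ?_⟩
  obtain ⟨⟨has, ha₁⟩, hℓa, hKa⟩ := by simpa only [lt_min_iff] using ha
  rw [lt_div_iff₀' (by positivity)] at hℓa hKa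
  by_contra! hle
  have hq := h.monotoneOn_threshold_Icc hmono
  have hfluxa : ∀ x ∈ Icc a (4 * a), -flux n γ x ≤ C := fun x hx ↦
    hflux a γ h x ⟨hx.1, hx.2.trans (by linarith)⟩
  have hhalf := h.half_le_fst_four_mul hn₁ hq hfluxa (by linarith) (by linarith) hℓa.le hle
  have hsmall := h.mul_le_of_le_fst_four_mul hn₁ hq hfluxa hc.le
    (fun x hx ↦ hgrowth a x h.pos_left hx.1 (by linarith [hx.2])) (by linarith) (by linarith)
    (half_pos hℓ).le hhalf
  exact hKa.not_ge hsmall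

end Descent

/-! ### The cooperative system -/

section CooperativeSystem

variable {n : ℕ} {x u w : ℝ} {q : ℝ × ℝ} {S : Set ℝ} {γ : ℝ → ℝ × ℝ}

/-- The right-hand side of `w' = systemForce n x u`, i.e. `(2 μ₁ μ₂) ^ n + (1 / 2 - ε) μ₂` as a
function of `u = exp (x² / 4) μ₂`. -/
noncomputable def systemForce (n : ℕ) (x u : ℝ) : ℝ :=
  (2 * mu1 x * (exp (-(x ^ 2 / 4)) * u)) ^ n + (1 / 2 - eps n) * (exp (-(x ^ 2 / 4)) * u)

/-- The equation for `μ₂` as a first-order field in `u = exp (x² / 4) μ₂` and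
`w = μ₂' + (x / 2) μ₂`. -/
noncomputable abbrev systemField (n : ℕ) : ℝ → ℝ × ℝ → ℝ × ℝ :=
  planarField (fun x w ↦ exp (x ^ 2 / 4) * w) (systemForce n)

theorem contDiff_mu1 : ContDiff ℝ 1 mu1 := by
  refine contDiff_one_iff_deriv.2 ⟨fun x ↦ (hasDerivAt_mu1 x).differentiableAt, ?_⟩
  rw [funext fun x ↦ (hasDerivAt_mu1 x).deriv]
  fun_prop

theorem locallyLipschitz_systemField (n : ℕ) :
    LocallyLipschitz fun z : ℝ × ℝ × ℝ ↦ systemField n z.1 z.2 := by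
  have hmu1 := contDiff_mu1
  refine ContDiff.locallyLipschitz (𝕂 := ℝ) ?_
  unfold systemField planarField systemForce
  fun_prop

theorem systemForce_zero (hn : 1 < n) (x : ℝ) : systemForce n x 0 = 0 := by
  rw [systemForce, mul_zero, mul_zero, mul_zero, zero_pow (Nat.ne_zero_of_lt hn), add_zero]

theorem systemForce_nonneg (hn : 2 < n) (hx : 0 < x) (hu : 0 ≤ u) : 0 ≤ systemForce n x u := by
  have hn' : (3 : ℝ) ≤ n := Nat.ofNat_le_cast.2 hn
  have hε : 0 ≤ 1 / 2 - eps n :=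
    sub_nonneg.2 (one_div_le_one_div_of_le two_pos (by linarith))
  have hμ := mu1_pos hx
  rw [systemForce]
  positivity

theorem systemForce_mul_lt (hn : 1 < n) (hx : 0 < x) {a b : ℝ} (hb : 0 < b) (hba : b < a) :
    systemForce n x b * a < systemForce n x a * b := by
  obtain ⟨k, rfl⟩ : ∃ k, n = k + 1 := ⟨n - 1, by omega⟩
  have hk : b ^ k < a ^ k := pow_lt_pow_left₀ hba hb.le (by omega)
  have hμ := mu1_pos hx
  have hgap : 0 < (2 * mu1 x * exp (-(x ^ 2 / 4))) ^ (k + 1) * (a * b * (a ^ k - b ^ k)) := by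
    have := sub_pos.2 hk
    have := hb.trans hba
    positivity
  rw [← sub_pos]
  convert hgap using 1
  rw [systemForce, systemForce, ← mul_assoc, ← mul_assoc, mul_pow, mul_pow]
  ring

theorem rpow_del_pow (hn : 1 < n) (hx : 0 < x) : (x ^ del n) ^ n = x ^ del n * (x ^ 2 * x ^ n) := by
  have hδ : del n * n = del n + ((2 : ℕ) + n) := by
    have hn' : (n : ℝ) - 1 ≠ 0 := sub_ne_zero.2 (by exact_mod_cast hn.ne')
    rw [del]
    field_simp
    push_cast
    ring
  rw [← rpow_natCast, ← rpow_mul hx.le, hδ, rpow_add hx, rpow_add hx, rpow_natCast, rpow_natCast]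

/-- The coordinates `(u, w)` in terms of `(m, m')`, where `μ₂ = x ^ (-δ) m`. -/
noncomputable def toSystem (n : ℕ) (x : ℝ) (q : ℝ × ℝ) : ℝ × ℝ :=
  (exp (x ^ 2 / 4) * (x ^ (-del n) * q.1), x ^ (-del n) * (q.2 + (x / 2 - del n / x) * q.1))

/-- The inverse of `toSystem n x`. -/
noncomputable def ofSystem (n : ℕ) (x : ℝ) (q : ℝ × ℝ) : ℝ × ℝ :=
  (x ^ del n * (exp (-(x ^ 2 / 4)) * q.1),
    x ^ del n * (q.2 - (x / 2 - del n / x) * (exp (-(x ^ 2 / 4)) * q.1)))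

theorem exp_neg_mul_exp_mul (y z : ℝ) : exp (-y) * (exp y * z) = z := by
  rw [← mul_assoc, ← exp_add, neg_add_cancel, exp_zero, one_mul]

theorem rpow_mul_rpow_neg_mul (hx : 0 < x) (p z : ℝ) : x ^ p * (x ^ (-p) * z) = z := by
  rw [← mul_assoc, ← rpow_add hx, add_neg_cancel, rpow_zero, one_mul]

theorem ofSystem_toSystem (n : ℕ) (hx : 0 < x) (q : ℝ × ℝ) :
    ofSystem n x (toSystem n x q) = q := by
  simp only [ofSystem, toSystem, exp_neg_mul_exp_mul, mul_sub, mul_left_comm (x / 2 - _),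
    rpow_mul_rpow_neg_mul hx, add_sub_cancel_right]

theorem toSystem_ofSystem (n : ℕ) (hx : 0 < x) (q : ℝ × ℝ) :
    toSystem n x (ofSystem n x q) = q := by
  have hexp (z : ℝ) : exp (x ^ 2 / 4) * (exp (-(x ^ 2 / 4)) * z) = z := by
    simpa only [neg_neg] using exp_neg_mul_exp_mul (-(x ^ 2 / 4)) z
  have hrpow (z : ℝ) : x ^ (-del n) * (x ^ del n * z) = z := by
    simpa only [neg_neg] using rpow_mul_rpow_neg_mul hx (-del n) z
  simp only [ofSystem, toSystem, hexp, mul_left_comm (x / 2 - _), ← mul_add, hrpow,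
    sub_add_cancel]

theorem hasDerivAt_half_sub_div (c : ℝ) (hx : x ≠ 0) :
    HasDerivAt (fun y ↦ y / 2 - c / y) (1 / 2 + c / x ^ 2) x := by
  refine (((hasDerivAt_id x).div_const 2).sub
    ((hasDerivAt_const x c).div (hasDerivAt_id x) hx)).congr_deriv ?_
  simp only [id]
  ring

theorem isIntegralCurveOn_toSystem (hn : 1 < n) (hS : S ⊆ Ioi 0)
    (hγ : IsIntegralCurveOn γ (profileField n) S) :
    IsIntegralCurveOn (fun x ↦ toSystem n x (γ x)) (systemField n) S := by
  intro x hxS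
  have hx : 0 < x := hS hxS
  have hm := hasDerivWithinAt_fst (hγ x hxS)
  have hr := (hasDerivAt_rpow_mul_div (-del n) hx).hasDerivWithinAt (s := S)
  have hu := (hasDerivAt_exp_sq_div_four x).hasDerivWithinAt.mul (hr.mul hm)
  have hw := hr.mul ((hasDerivWithinAt_snd (hγ x hxS)).add
    ((hasDerivAt_half_sub_div (del n) hx.ne').hasDerivWithinAt.mul hm))
  refine (hu.prodMk hw).congr_deriv (Prod.ext ?_ ?_)
  · simp only [planarField, toSystem, profileField, Pi.mul_apply]
    ring
  · have hpow : (2 * mu1 x * (x ^ (-del n) * (γ x).1)) ^ n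
        = x ^ (-del n) * (1 / x ^ 2 * (2 * mu1 x * (γ x).1 / x) ^ n) := by
      have hδ := (rpow_pos_of_pos hx (del n)).ne'
      rw [rpow_neg hx.le, mul_left_comm, mul_pow, inv_pow, rpow_del_pow hn hx, div_pow]
      field_simp
    simp only [planarField, toSystem, profileField, systemForce, exp_neg_mul_exp_mul, hpow,
      Pi.mul_apply, Pi.add_apply]
    field_simp
    ring

theorem isIntegralCurveOn_ofSystem (hn : 1 < n) (hS : S ⊆ Ioi 0)
    (hγ : IsIntegralCurveOn γ (systemField n) S) :
    IsIntegralCurveOn (fun x ↦ ofSystem n x (γ x)) (profileField n) S := by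
  intro x hxS
  have hx : 0 < x := hS hxS
  have hr := (hasDerivAt_rpow_mul_div (del n) hx).hasDerivWithinAt (s := S)
  have hμ := (hasDerivAt_exp_neg_sq_div_four x).hasDerivWithinAt.mul
    (hasDerivWithinAt_fst (hγ x hxS))
  have hm' := hr.mul ((hasDerivWithinAt_snd (hγ x hxS)).sub
    ((hasDerivAt_half_sub_div (del n) hx.ne').hasDerivWithinAt.mul hμ))
  refine ((hr.mul hμ).prodMk hm').congr_deriv (Prod.ext ?_ ?_)
  · simp only [planarField, ofSystem, profileField, Pi.mul_apply, exp_neg_mul_exp_mul]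
    ring
  · have hpow (v : ℝ) : 1 / x ^ 2 * (2 * mu1 x * (x ^ del n * v) / x) ^ n
        = x ^ del n * (2 * mu1 x * v) ^ n := by
      rw [mul_left_comm (2 * mu1 x), mul_div_assoc, mul_pow, rpow_del_pow hn hx, div_pow]
      field_simp
    simp only [planarField, ofSystem, profileField, systemForce, exp_neg_mul_exp_mul, hpow,
      Pi.mul_apply, Pi.sub_apply]
    field_simp
    ring

end CooperativeSystem

/-! ### Global solutions -/

section GlobalSolutions

variable {n : ℕ} {x a s t ξ ρ c ℓ ξm : ℝ} {q : ℝ × ℝ} {γ : ℝ → ℝ × ℝ} {m m' c0 : ℝ → ℝ} {S : Set ℝ}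

/-- `m` is a positive solution on `(0, ∞)` with `m ξ = ρ` and `m' ξ = 0` that tends to `0` at
infinity. -/
def IsDecayingSol (n : ℕ) (ξ ρ : ℝ) (m : ℝ → ℝ) : Prop :=
  ContDiffOn ℝ 2 m (Ioi 0) ∧
  (∀ x ∈ Ioi (0 : ℝ), deriv (deriv m) x + (x / 2 - 2 * del n / x) * deriv m x
      + (del n * (del n + 1) / x ^ 2 - (del n / 2 - eps n)) * m x
    = (1 / x ^ 2) * (2 * mu1 x * m x / x) ^ n) ∧
  m ξ = ρ ∧ deriv m ξ = 0 ∧ (∀ x ∈ Ioi (0 : ℝ), 0 < m x) ∧ Tendsto m atTop (𝓝 0)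

theorem IsShootSol.isIntegralCurveOn (h : IsShootSol n ξ ρ m) :
    IsIntegralCurveOn (fun x ↦ (m x, derivWithin m (Ioc 0 ξ) x)) (profileField n) (Ioc 0 ξ) := by
  obtain ⟨hm, hode, -⟩ := h
  rw [← one_add_one_eq_two, contDiffOn_succ_iff_derivWithin (uniqueDiffOn_Ioc 0 ξ)] at hm
  intro x hx
  refine ((hm.1 x hx).hasDerivWithinAt.prodMk
    (hm.2.2.differentiableOn one_ne_zero x hx).hasDerivWithinAt).congr_deriv (Prod.ext rfl ?_)
  simp only [profileField, ← hode x hx]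
  ring

theorem IsDecayingSol.isIntegralCurveOn (h : IsDecayingSol n ξ ρ m) :
    IsIntegralCurveOn (fun x ↦ (m x, deriv m x)) (profileField n) (Ioi 0) := by
  obtain ⟨hm, hode, -⟩ := h
  rw [← one_add_one_eq_two, contDiffOn_succ_iff_deriv_of_isOpen isOpen_Ioi] at hm
  intro x hx
  have hnhds := isOpen_Ioi.mem_nhds hx
  refine (((hm.1 x hx).differentiableAt hnhds).hasDerivAt.prodMk
    ((hm.2.2.differentiableOn one_ne_zero x hx).differentiableAt
      hnhds).hasDerivAt).hasDerivWithinAt.congr_deriv (Prod.ext rfl ?_)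
  simp only [profileField, ← hode x hx]
  ring

theorem contDiffOn_one_of_isIntegralCurveOn_profileField
    (hγ : IsIntegralCurveOn γ (profileField n) (Ioi 0)) : ContDiffOn ℝ 1 γ (Ioi 0) := by
  have hderiv : ∀ x ∈ Ioi 0, HasDerivAt γ (profileField n x (γ x)) x := fun x hx ↦
    (hγ x hx).hasDerivAt (isOpen_Ioi.mem_nhds hx)
  rw [← zero_add (1 : WithTop ℕ∞), contDiffOn_succ_iff_deriv_of_isOpen isOpen_Ioi, contDiffOn_zero]
  refine ⟨fun x hx ↦ (hderiv x hx).differentiableAt.differentiableWithinAt, by simp, ?_⟩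
  refine ContinuousOn.congr ?_ fun x hx ↦ (hderiv x hx).deriv
  have hμ : Continuous mu1 := contDiff_mu1.continuous
  have hγc := hγ.continuousOn
  unfold profileField
  fun_prop (disch := (rintro x (hx : 0 < x); positivity))

theorem isDecayingSol_of_isIntegralCurveOn (hγ : IsIntegralCurveOn γ (profileField n) (Ioi 0))
    (hξ : 0 < ξ) (hγξ : γ ξ = (ρ, 0)) (hpos : ∀ x > 0, 0 < (γ x).1)
    (hlim : Tendsto (fun x ↦ (γ x).1) atTop (𝓝 0)) : IsDecayingSol n ξ ρ fun x ↦ (γ x).1 := by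
  have hm : ∀ x ∈ Ioi 0, HasDerivAt (fun x ↦ (γ x).1) (γ x).2 x := fun x hx ↦
    (hasDerivWithinAt_fst (hγ x hx)).hasDerivAt (isOpen_Ioi.mem_nhds hx)
  have hderiv : EqOn (deriv fun x ↦ (γ x).1) (fun x ↦ (γ x).2) (Ioi 0) := fun x hx ↦
    (hm x hx).deriv
  have hγC := contDiffOn_one_of_isIntegralCurveOn_profileField hγ
  refine ⟨?_, fun x hx ↦ ?_, congrArg Prod.fst hγξ, (hderiv hξ).trans (congrArg Prod.snd hγξ),
    hpos, hlim⟩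
  · rw [← one_add_one_eq_two, contDiffOn_succ_iff_deriv_of_isOpen isOpen_Ioi]
    exact ⟨fun x hx ↦ (hm x hx).differentiableAt.differentiableWithinAt, by simp,
      hγC.snd.congr hderiv⟩
  · have hm' := ((hasDerivWithinAt_snd (hγ x hx)).congr hderiv (hderiv hx)).hasDerivAt
      (isOpen_Ioi.mem_nhds hx)
    rw [hm'.deriv, hderiv hx, profileField]
    ring

theorem toSystem_fst_pos_iff (hx : 0 < x) : 0 < (toSystem n x q).1 ↔ 0 < q.1 := by
  rw [toSystem, mul_pos_iff_of_pos_left (exp_pos _), mul_pos_iff_of_pos_left (rpow_pos_of_pos hx _)]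

theorem ofSystem_fst_pos (hx : 0 < x) (hq : 0 < q.1) : 0 < (ofSystem n x q).1 := by
  rwa [← toSystem_fst_pos_iff hx, toSystem_ofSystem n hx]

theorem toSystem_snd_neg (hx : 0 < x) (hxδ : x < √(2 * del n)) (hq₁ : 0 < q.1) (hq₂ : q.2 ≤ 0) :
    (toSystem n x q).2 < 0 := by
  have hslope : x / 2 < del n / x := by
    rw [div_lt_div_iff₀ two_pos hx]
    linarith [(lt_sqrt hx.le).1 hxδ]
  exact mul_neg_of_pos_of_neg (rpow_pos_of_pos hx _)
    (add_neg_of_nonpos_of_neg hq₂ (mul_neg_of_neg_of_pos (sub_neg.2 hslope) hq₁))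

theorem toSystem_snd_pos (hx : 0 < x) (hxδ : √(2 * del n) < x) (hq₁ : 0 < q.1) (hq₂ : 0 ≤ q.2) :
    0 < (toSystem n x q).2 := by
  have hslope : del n / x < x / 2 := by
    rw [div_lt_div_iff₀ hx two_pos]
    linarith [(sqrt_lt' hx).1 hxδ]
  exact mul_pos (rpow_pos_of_pos hx _)
    (add_pos_of_nonneg_of_pos hq₂ (mul_pos (sub_pos.2 hslope) hq₁))

theorem isDescentOn_ofSystem (hn : 1 < n) (ha : 0 < a)
    (hγ : IsIntegralCurveOn γ (systemField n) (Icc a t)) (hγa : γ a = toSystem n a (c, 0))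
    (hpos : ∀ x ∈ Icc a t, 0 < (γ x).1) (hc : c ^ (n - 1) < threshold n a) :
    IsDescentOn n a t fun x ↦ ofSystem n x (γ x) := by
  have hsub : Icc a t ⊆ Ioi 0 := fun x hx ↦ ha.trans_le hx.1
  have hleft : ofSystem n a (γ a) = (c, 0) := by rw [hγa, ofSystem_toSystem n ha]
  exact ⟨ha, isIntegralCurveOn_ofSystem hn hsub hγ,
    fun x hx ↦ ofSystem_fst_pos (hsub hx) (hpos x hx), congrArg Prod.snd hleft, by rwa [hleft]⟩

theorem snd_neg_of_isIntegralCurveOn_systemField (hn : 1 < n) (ha : 0 < a) (hat : a ≤ t)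
    (hγ : IsIntegralCurveOn γ (systemField n) (Icc a t)) (hγa : γ a = toSystem n a (c, 0))
    (hpos : ∀ x ∈ Icc a t, 0 < (γ x).1) (hc : c ^ (n - 1) < threshold n a)
    (hq : MonotoneOn (threshold n) (Ioc 0 t)) (htδ : t < √(2 * del n)) : (γ t).2 < 0 := by
  have h := isDescentOn_ofSystem hn ha hγ hγa hpos hc
  have ht := right_mem_Icc.2 hat
  have hneg := toSystem_snd_neg (ha.trans_le hat) htδ (h.fst_pos t ht)
    (h.snd_nonpos hn (h.monotoneOn_threshold_Icc hq) ht)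
  rwa [toSystem_ofSystem n (ha.trans_le hat)] at hneg

theorem continuousOn_toSystem (hS : S ⊆ Ioi 0) (hc : ContinuousOn c0 S) :
    ContinuousOn (fun x ↦ toSystem n x (c0 x, 0)) S := by
  have hne : ∀ x ∈ S, x ≠ 0 := fun x hx ↦ (hS hx : 0 < x).ne'
  unfold toSystem
  fun_prop (disch := grind)

theorem exists_systemField_trajectory (hn : 4 ≤ n) (hξm : ξm ∈ Ioo 0 (xi0 n))
    (hrate : thresholdRate n ξm = 0) (hcont : ContinuousOn c0 (Ioo 0 ξm)) (hℓ : 0 < ℓ)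
    (hc0 : ∀ ξ ∈ Ioo 0 ξm, ℓ < c0 ξ ∧ c0 ξ ^ (n - 1) < threshold n ξ) :
    ∃ ξ ∈ Ioo 0 ξm, ∃ γ, IsIntegralCurveOn γ (systemField n) (Ici ξ) ∧
      γ ξ = toSystem n ξ (c0 ξ, 0) ∧ ∀ t ≥ ξ, 0 < (γ t).1 ∧ (γ t).2 ≤ 0 := by
  have hn₁ : 1 < n := by omega
  have hδm := sqrt_two_mul_del_lt hn hξm hrate
  obtain ⟨s, hs, hsδ⟩ := exists_between (sqrt_two_mul_del_mem_Ioo hn₁).1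
  obtain ⟨b, hδb, hbm⟩ := exists_between hδm
  have hs₀ : s ∈ Ioo 0 (xi0 n) := ⟨hs, (hsδ.trans hδm).trans hξm.2⟩
  have hs_rate := thresholdRate_pos hξm hrate ⟨hs, hsδ.trans hδm⟩
  have hmono := monotoneOn_threshold hn₁ hs₀ hs_rate
  obtain ⟨r, hr, hdescent⟩ := exists_forall_isDescentOn_fst_lt (by omega) hs₀ hs_rate hℓ
  obtain ⟨a, ha, har⟩ := exists_between (lt_min hr hs)
  obtain ⟨har, has⟩ := lt_min_iff.1 har
  have hab : a ≤ b := (has.trans (hsδ.trans hδb)).le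
  have habm : Icc a b ⊆ Ioo 0 ξm := Icc_subset_Ioo ha hbm
  have haξ : a ∈ Ioo 0 ξm := habm (left_mem_Icc.2 hab)
  have hbξ : b ∈ Ioo 0 ξm := habm (right_mem_Icc.2 hab)
  have hpos : ∀ ξ ∈ Ioo 0 ξm, 0 < c0 ξ := fun ξ hξ ↦ hℓ.trans (hc0 ξ hξ).1
  have hturn : ∀ γ, γ a = toSystem n a (c0 a, 0) → ∀ t ∈ Ioc a s,
      IsIntegralCurveOn γ (systemField n) (Icc a t) → (∀ x ∈ Icc a t, 0 < (γ x).1) →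
      (γ t).2 ≠ 0 := fun γ hγa t ht hγ hγpos ↦
    (snd_neg_of_isIntegralCurveOn_systemField hn₁ ha ht.1.le hγ hγa hγpos (hc0 a haξ).2
      (hmono.mono (Ioc_subset_Ioc_right ht.2)) (ht.2.trans_lt hsδ)).ne
  have hexit : ∀ γ, γ a = toSystem n a (c0 a, 0) →
      IsIntegralCurveOn γ (systemField n) (Icc a s) → ¬∀ x ∈ Icc a s, 0 < (γ x).1 :=
    fun γ hγa hγ hγpos ↦ by
    have hlt := hdescent a har _ (isDescentOn_ofSystem hn₁ ha hγ hγa hγpos (hc0 a haξ).2)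
    rw [hγa, ofSystem_toSystem n ha] at hlt
    exact hlt.not_gt (hc0 a haξ).1
  obtain ⟨ξ, hξ, hγ⟩ := exists_positive_trajectory (fun x ↦ exp_pos _)
    (locallyLipschitz_systemField n) (systemForce_zero hn₁)
    (fun x u ↦ systemForce_nonneg (by omega)) ha hab
    (continuousOn_toSystem (fun x hx ↦ (habm hx).1) (hcont.mono habm))
    (fun ξ hξ ↦ (toSystem_fst_pos_iff (habm hξ).1).2 (hpos ξ (habm hξ)))
    (toSystem_snd_neg ha (has.trans hsδ) (hpos a haξ) le_rfl)
    (toSystem_snd_pos hbξ.1 hδb (hpos b hbξ) le_rfl) has.le hturn hexit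
  exact ⟨ξ, habm hξ, hγ⟩

theorem tendsto_rpow_mul_exp_neg_sq_div (d : ℝ) :
    Tendsto (fun x : ℝ ↦ x ^ d * exp (-(x ^ 2 / 4))) atTop (𝓝 0) := by
  refine ((tendsto_rpow_abs_mul_exp_neg_mul_sq_cocompact (show (0 : ℝ) < 1 / 4 by norm_num)
    d).mono_left atTop_le_cocompact).congr' ?_
  filter_upwards [eventually_gt_atTop 0] with x hx
  rw [abs_of_pos hx]
  ring_nf

theorem tendsto_ofSystem_fst (hγ : IsIntegralCurveOn γ (systemField n) (Ici ξ))
    (hsign : ∀ x ≥ ξ, 0 < (γ x).1 ∧ (γ x).2 ≤ 0) :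
    Tendsto (fun x ↦ (ofSystem n x (γ x)).1) atTop (𝓝 0) := by
  have hanti : AntitoneOn (fun x ↦ (γ x).1) (Ici ξ) :=
    antitoneOn_of_hasDerivWithinAt (convex_Ici ξ) (fun x hx ↦ hasDerivWithinAt_fst (hγ x hx))
      fun x hx ↦ mul_nonpos_of_nonneg_of_nonpos (exp_pos _).le (hsign x hx).2
  have hlim := (tendsto_rpow_mul_exp_neg_sq_div (del n)).mul_const (γ ξ).1
  rw [zero_mul] at hlim
  refine squeeze_zero' ?_ ?_ hlim
  all_goals filter_upwards [eventually_ge_atTop ξ, eventually_gt_atTop 0] with x hξx hx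
  · exact (ofSystem_fst_pos hx (hsign x hξx).1).le
  · rw [ofSystem, ← mul_assoc]
    have hu := hanti self_mem_Ici hξx hξx
    dsimp only at hu ⊢
    gcongr

theorem IsShootSol.exists_isDecayingSol (hn : 1 < n) (hξ : 0 < ξ) (h : IsShootSol n ξ ρ m)
    (hγ : IsIntegralCurveOn γ (systemField n) (Ici ξ)) (hγξ : γ ξ = toSystem n ξ (ρ, 0))
    (hsign : ∀ x ≥ ξ, 0 < (γ x).1 ∧ (γ x).2 ≤ 0) : ∃ m', IsDecayingSol n ξ ρ m' := by
  have hmξ : (m ξ, derivWithin m (Ioc 0 ξ) ξ) = (ρ, 0) := Prod.ext h.2.2.1 h.2.2.2.1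
  have hofξ : ofSystem n ξ (γ ξ) = (ρ, 0) := by rw [hγξ, ofSystem_toSystem n hξ]
  have hglue := isIntegralCurveOn_glue h.isIntegralCurveOn
    (isIntegralCurveOn_ofSystem hn (fun x hx ↦ hξ.trans_le hx) hγ) (hmξ.trans hofξ.symm)
  refine ⟨_, isDecayingSol_of_isIntegralCurveOn hglue hξ ((if_pos le_rfl).trans hmξ)
    (fun x hx ↦ ?_) ?_⟩
  · rcases le_or_gt x ξ with hxξ | hξx
    · rw [if_pos hxξ]
      exact h.2.2.2.2.1 x ⟨hx, hxξ⟩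
    · rw [if_neg hξx.not_ge]
      exact ofSystem_fst_pos hx (hsign x hξx.le).1
  · refine (tendsto_ofSystem_fst hγ hsign).congr' ?_
    filter_upwards [eventually_gt_atTop ξ] with x hξx
    rw [if_neg hξx.not_ge]

theorem half_le_snd_of_le_toSystem_snd (hn : 1 < n) (hx : 1 ≤ x) (hq : q.1 ∈ Icc 0 c)
    (hc : c ≤ (toSystem n x q).2) : c / 2 ≤ q.2 := by
  have hx₀ : 0 < x := one_pos.trans_le hx
  have hc₀ : 0 ≤ c := hq.1.trans hq.2
  have hδ : 1 ≤ del n := by linarith [del_eq hn, eps_pos hn]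
  have hpow : c * x ≤ q.2 + (x / 2 - del n / x) * q.1 := calc
    c * x ≤ c * x ^ del n := by gcongr; exact self_le_rpow_of_one_le hx hδ
    _ ≤ (toSystem n x q).2 * x ^ del n := by gcongr
    _ = q.2 + (x / 2 - del n / x) * q.1 := by rw [toSystem, mul_comm, rpow_mul_rpow_neg_mul hx₀]
  have hdrop : 0 ≤ del n / x * q.1 := mul_nonneg (by positivity) hq.1
  have hslope : x / 2 * q.1 ≤ x / 2 * c := by gcongr; exact hq.2
  have hcx : c ≤ c * x := le_mul_of_one_le_right hc₀ hx
  linarith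

/-- If `w = c > 0` somewhere then `w ≥ c` from there on, so `m' ≥ c / 2` as soon as `m ≤ c`; this
makes `m` exceed `c`. -/
theorem toSystem_snd_nonpos (hn : 2 < n) (hγ : IsIntegralCurveOn γ (profileField n) (Ioi 0))
    (hpos : ∀ x > 0, 0 < (γ x).1) (hlim : Tendsto (fun x ↦ (γ x).1) atTop (𝓝 0)) (hx : 0 < x) :
    (toSystem n x (γ x)).2 ≤ 0 := by
  have hn₁ : 1 < n := by omega
  by_contra! hw
  set c := (toSystem n x (γ x)).2
  have hmono : MonotoneOn (fun x ↦ (toSystem n x (γ x)).2) (Ioi 0) :=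
    monotoneOn_snd_planarField (fun x u ↦ systemForce_nonneg hn)
      (isIntegralCurveOn_toSystem hn₁ subset_rfl hγ)
      fun x hx ↦ (toSystem_fst_pos_iff hx).2 (hpos x hx)
  obtain ⟨X, hX⟩ := eventually_atTop.1 (hlim.eventually_lt_const hw)
  set Y := max X (max x 1)
  have hslope : ∀ y ∈ Icc Y (Y + 2), -(γ y).2 ≤ -(c / 2) := fun y hy ↦ by
    have hXy : X ≤ y := (le_max_left _ _).trans hy.1
    have hxy : x ≤ y := ((le_max_left _ _).trans (le_max_right _ _)).trans hy.1
    have hy₁ : 1 ≤ y := ((le_max_right _ _).trans (le_max_right _ _)).trans hy.1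
    have hy₀ : 0 < y := hx.trans_le hxy
    exact neg_le_neg (half_le_snd_of_le_toSystem_snd hn₁ hy₁ ⟨(hpos y hy₀).le, (hX y hXy).le⟩
      (hmono hx hy₀ hxy))
  have hY : 0 < Y := one_pos.trans_le ((le_max_right _ _).trans (le_max_right _ _))
  have hincr := sub_le_mul_sub_of_hasDerivWithinAt_le (f := fun x ↦ -(γ x).1) (D := Ioi 0)
    (by linarith : Y ≤ Y + 2) (fun y hy ↦ hY.trans_le hy.1)
    (fun y hy ↦ (hasDerivWithinAt_fst (hγ y (hY.trans_le hy.1))).neg) hslope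
  linarith [hpos Y hY, hX (Y + 2) (by linarith [le_max_left X (max x 1)])]

theorem IsDecayingSol.eqOn_shootSol (hn : 1 < n) (h : IsDecayingSol n ξ ρ m)
    (h' : IsShootSol n ξ ρ m') : EqOn m m' (Ioc 0 ξ) := by
  intro x hx
  have hsub : Icc x ξ ⊆ Ioi 0 := fun y hy ↦ hx.1.trans_le hy.1
  have heq := integralCurveOn_eqOn_of_locallyLipschitz (locallyLipschitz_systemField n)
    (isIntegralCurveOn_toSystem hn hsub (h.isIntegralCurveOn.mono hsub))
    (isIntegralCurveOn_toSystem hn hsub (h'.isIntegralCurveOn.mono fun y hy ↦ ⟨hsub hy, hy.2⟩))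
    (by rw [h.2.2.1, h.2.2.2.1, h'.2.2.1, h'.2.2.2.1]) (left_mem_Icc.2 hx.2)
  have hof := congrArg (ofSystem n x) heq
  dsimp only at hof
  rw [ofSystem_toSystem n hx.1, ofSystem_toSystem n hx.1] at hof
  exact congrArg Prod.fst hof

theorem IsDecayingSol.tendsto_lam (hn : 1 < n) (hξ : 0 < ξ) (h : IsDecayingSol n ξ ρ m)
    (h' : IsShootSol n ξ ρ m') : Tendsto m (𝓝[>] 0) (𝓝 (lam n)) :=
  h'.2.2.2.2.2.congr' <| eventually_of_mem (Ioc_mem_nhdsGT hξ) fun _ hx ↦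
    (h.eqOn_shootSol hn h' hx).symm

theorem IsDecayingSol.le_of_tendsto_lam (hn : 2 < n) (h : IsDecayingSol n ξ ρ m)
    (h' : IsDecayingSol n s c m') (hlim : Tendsto m (𝓝[>] 0) (𝓝 (lam n)))
    (hlim' : Tendsto m' (𝓝[>] 0) (𝓝 (lam n))) (hx : 0 < x) : m x ≤ m' x := by
  have hn₁ : 1 < n := by omega
  have hratio := hlim.div hlim' (lam_pos hn₁).ne'
  rw [div_self (lam_pos hn₁).ne'] at hratio
  have hle := fst_le_fst_of_tendsto_div (fun x _ ↦ one_le_exp (by positivity))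
    (fun x u ↦ systemForce_nonneg hn) (fun x hx a b ↦ systemForce_mul_lt hn₁ hx)
    (isIntegralCurveOn_toSystem hn₁ subset_rfl h.isIntegralCurveOn)
    (isIntegralCurveOn_toSystem hn₁ subset_rfl h'.isIntegralCurveOn)
    (fun x hx ↦ (toSystem_fst_pos_iff hx).2 (h.2.2.2.2.1 x hx))
    (fun x hx ↦ (toSystem_fst_pos_iff hx).2 (h'.2.2.2.2.1 x hx))
    (fun x ↦ toSystem_snd_nonpos hn h.isIntegralCurveOn h.2.2.2.2.1 h.2.2.2.2.2)
    (hratio.congr' ?_) hx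
  · simpa only [toSystem, mul_le_mul_iff_right₀ (exp_pos _),
      mul_le_mul_iff_right₀ (rpow_pos_of_pos hx _)] using hle
  · filter_upwards [self_mem_nhdsWithin] with y hy
    rw [toSystem, toSystem, mul_div_mul_left _ _ (exp_pos _).ne',
      mul_div_mul_left _ _ (rpow_pos_of_pos hy _).ne', Pi.div_apply]

theorem IsDecayingSol.deriv_neg (hn : 1 < n) (h : IsDecayingSol n ξ ρ m) (hξ : 0 < ξ)
    (hρ : ρ ^ (n - 1) < threshold n ξ) (hξx : ξ < x) (hq : MonotoneOn (threshold n) (Ioc 0 x)) :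
    deriv m x < 0 := by
  have hdescent : IsDescentOn n ξ x fun x ↦ (m x, deriv m x) :=
    ⟨hξ, h.isIntegralCurveOn.mono fun y hy ↦ hξ.trans_le hy.1,
      fun y hy ↦ h.2.2.2.2.1 y (hξ.trans_le hy.1), h.2.2.2.1, by rwa [h.2.2.1]⟩
  exact hdescent.snd_neg hn (hdescent.monotoneOn_threshold_Icc hq) (right_mem_Ioc.2 hξx)

theorem IsDecayingSol.le_of_tendsto_lam_of_pow_lt (hn : 2 < n) (h : IsDecayingSol n ξ ρ m)
    (h' : IsDecayingSol n s c m') (hξ : 0 < ξ) (hlim : Tendsto m (𝓝[>] 0) (𝓝 (lam n)))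
    (hlim' : Tendsto m' (𝓝[>] 0) (𝓝 (lam n))) (hρ : ρ ^ (n - 1) < threshold n ξ)
    (hq : MonotoneOn (threshold n) (Ioc 0 s)) : s ≤ ξ := by
  by_contra! hξs
  have heq : EqOn m m' (Ioi 0) := fun x hx ↦
    (h.le_of_tendsto_lam hn h' hlim hlim' hx).antisymm (h'.le_of_tendsto_lam hn h hlim' hlim hx)
  have hderiv : deriv m s = 0 := by
    rw [(heq.eventuallyEq_of_mem (Ioi_mem_nhds (hξ.trans hξs))).deriv_eq, h'.2.2.2.1]
  exact (h.deriv_neg (by omega) hξ hρ hξs hq).ne hderiv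

end GlobalSolutions

end

/-- Second shooting argument: given the curve c₀ from the first shooting argument,
there is a unique ξ* ∈ (0, ξ_m) whose solution extends to a positive solution on
all of (0,∞) that converges to 0 at infinity. -/
theorem shooting_towards_infinity (n : ℕ) (hn : 4 ≤ n)
    (ξm : ℝ) (hξm : ξm ∈ Set.Ioo 0 (xi0 n))
    (hchar : deriv (om1 n) ξm * c2 n ξm ^ (n - 1) + deriv (om2 n) ξm = 0)
    (c0 : ℝ → ℝ) (hc0cont : ContinuousOn c0 (Set.Ioo 0 ξm))
    (hc0 : ∀ ξ ∈ Set.Ioo (0:ℝ) ξm,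
      lam n < c0 ξ ∧ c0 ξ < c2 n ξ ∧ ∃ m : ℝ → ℝ, IsShootSol n ξ (c0 ξ) m) :
    ∃! ξs : ℝ, ξs ∈ Set.Ioo (0:ℝ) ξm ∧
      ∃ m : ℝ → ℝ, ContDiffOn ℝ 2 m (Set.Ioi 0) ∧
        (∀ x ∈ Set.Ioi (0:ℝ),
          deriv (deriv m) x + (x / 2 - 2 * del n / x) * deriv m x
              + (del n * (del n + 1) / x ^ 2 - (del n / 2 - eps n)) * m x
            = (1 / x ^ 2) * (2 * mu1 x * m x / x) ^ n) ∧
        m ξs = c0 ξs ∧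
        deriv m ξs = 0 ∧
        (∀ x ∈ Set.Ioi (0:ℝ), 0 < m x) ∧
        Filter.Tendsto m Filter.atTop (nhds 0) := by
  have hn₁ : 1 < n := by omega
  have hrate := thresholdRate_eq_zero hn₁ hξm hchar
  have hbelow : ∀ ξ ∈ Set.Ioo 0 ξm, c0 ξ ^ (n - 1) < threshold n ξ := fun ξ hξ ↦ by
    have hcξ := hc0 ξ hξ
    rw [← c2_pow_pred hn₁ ⟨hξ.1, hξ.2.trans hξm.2⟩]
    exact pow_lt_pow_left₀ hcξ.2.1 ((lam_pos hn₁).trans hcξ.1).le (by omega)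
  obtain ⟨ξ, hξ, γ, hγ, hγξ, hsign⟩ := exists_systemField_trajectory hn hξm hrate hc0cont
    (lam_pos hn₁) fun ξ hξ ↦ ⟨(hc0 ξ hξ).1, hbelow ξ hξ⟩
  obtain ⟨_, hshoot⟩ := (hc0 ξ hξ).2.2
  obtain ⟨m, hm⟩ := hshoot.exists_isDecayingSol hn₁ hξ.1 hγ hγξ hsign
  have hle : ∀ a ∈ Set.Ioo 0 ξm, ∀ b ∈ Set.Ioo 0 ξm, ∀ m m', IsDecayingSol n a (c0 a) m →
      IsDecayingSol n b (c0 b) m' → b ≤ a := fun a ha b hb m m' hm hm' ↦ by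
    obtain ⟨_, hshoot_a⟩ := (hc0 a ha).2.2
    obtain ⟨_, hshoot_b⟩ := (hc0 b hb).2.2
    exact hm.le_of_tendsto_lam_of_pow_lt (by omega) hm' ha.1 (hm.tendsto_lam hn₁ ha.1 hshoot_a)
      (hm'.tendsto_lam hn₁ hb.1 hshoot_b) (hbelow a ha)
      (monotoneOn_threshold hn₁ ⟨hb.1, hb.2.trans hξm.2⟩ (thresholdRate_pos hξm hrate hb))
  exact ⟨ξ, ⟨hξ, m, hm⟩, fun η ⟨hη, m', hm'⟩ ↦
    (hle ξ hξ η hη m m' hm hm').antisymm (hle η hη ξ hξ m' m hm' hm)⟩
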